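/- arXiv:2010.12103 — 3 statements merged into one kernel-verified Lean document; each statement's English description precedes it below -/
import Mathlib

section
/- Assume c = b − a ≤ 1. Define g : X^m → ℝ by g(S) = m·SD⁻(F,S) = sup_{f∈F} { m E_μ[f] − Σ_{i=1}^m f(s_i) }, and for each i define g_i(S) = inf_{s'_i ∈ X} sup_{f∈F} { m E_μ[f] − Σ_{j≠i} f(s_j) − f(s'_i) }. Then for every S ∈ X^m and every i: 0 ≤ g(S) − g_i(S) ≤ 1, and Σ_{i=1}^m ( g(S) − g_i(S) ) ≤ g(S) + m γ_F. That is, g is a (1, m γ_F)-self-bounding function. -/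
open MeasureTheory

noncomputable section

/-- Map a Boolean to a `±1` sign: `true ↦ 1`, `false ↦ -1`. -/
def sgnB (x : Bool) : ℝ := if x then 1 else -1

/-- The `n`-Monte-Carlo Empirical Rademacher Average
`R̂ⁿ_m(F,S,σ) = (1/n) Σ_j sup_{f∈F} (1/m) Σ_i σ_{j,i} f(s_i)`. -/
def mcera {X ι : Type*} (f : ι → X → ℝ) (n m : ℕ) (S : Fin m → X)
    (σ : Fin n → Fin m → Bool) : ℝ :=
  (n : ℝ)⁻¹ * ∑ j : Fin n, ⨆ l : ι, (m : ℝ)⁻¹ * ∑ k : Fin m, sgnB (σ j k) * f l (S k)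

/-- Uniform measure on `n × m` sign matrices: the entries are independent
uniform Rademacher (±1) random variables. -/
def radMeasure (n m : ℕ) : Measure (Fin n → Fin m → Bool) :=
  (PMF.uniformOfFintype (Fin n → Fin m → Bool)).toMeasure

/-- The Empirical Rademacher Average `R̂(F,S) = E_σ[R̂ⁿ_m(F,S,σ)]`. -/
def era {X ι : Type*} (f : ι → X → ℝ) (n m : ℕ) (S : Fin m → X) : ℝ :=
  ∫ σ, mcera f n m S σ ∂(radMeasure n m)

/-- The Rademacher Complexity `R(F,m) = E_S[R̂(F,S)]`, `S` being `m` i.i.d. samples. -/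
def rc {X ι : Type*} [MeasurableSpace X] (f : ι → X → ℝ) (n m : ℕ) (μ : Measure X) : ℝ :=
  ∫ S : Fin m → X, era f n m S ∂(Measure.pi fun _ : Fin m => μ)

/-- `ẑ(S) = sup_{f∈F, 1≤i≤m} |f(s_i)|`. -/
def zhat {X ι : Type*} (f : ι → X → ℝ) {m : ℕ} (S : Fin m → X) : ℝ :=
  ⨆ p : ι × Fin m, |f p.1 (S p.2)|

/-- `ν̂_F(S) = (1/m) sup_{f∈F} Σ_i |f(s_i)|`. -/
def nuhat {X ι : Type*} (f : ι → X → ℝ) {m : ℕ} (S : Fin m → X) : ℝ :=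
  (m : ℝ)⁻¹ * ⨆ l : ι, ∑ k : Fin m, |f l (S k)|

/-- The empirical wimpy variance `σ̂²_F(S) = (1/m) sup_{f∈F} Σ_i f(s_i)²`. -/
def sigma2hat {X ι : Type*} (f : ι → X → ℝ) {m : ℕ} (S : Fin m → X) : ℝ :=
  (m : ℝ)⁻¹ * ⨆ l : ι, ∑ k : Fin m, (f l (S k)) ^ 2

/-- The wimpy variance `σ²_F = sup_{f∈F} E_μ[f²]`. -/
def wimpyVar {X ι : Type*} [MeasurableSpace X] (f : ι → X → ℝ) (μ : Measure X) : ℝ :=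
  ⨆ l : ι, ∫ x, (f l x) ^ 2 ∂μ

/-- The positive supremum deviation `SD⁺(F,S) = sup_{f∈F} ((1/m)Σ_i f(s_i) - E_μ[f])`. -/
def sdPlus {X ι : Type*} [MeasurableSpace X] (f : ι → X → ℝ) (μ : Measure X)
    {m : ℕ} (S : Fin m → X) : ℝ :=
  ⨆ l : ι, ((m : ℝ)⁻¹ * ∑ k : Fin m, f l (S k) - ∫ x, f l x ∂μ)

/-- The negative supremum deviation `SD⁻(F,S) = sup_{f∈F} (E_μ[f] - (1/m)Σ_i f(s_i))`. -/
def sdMinus {X ι : Type*} [MeasurableSpace X] (f : ι → X → ℝ) (μ : Measure X)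
    {m : ℕ} (S : Fin m → X) : ℝ :=
  ⨆ l : ι, ((∫ x, f l x ∂μ) - (m : ℝ)⁻¹ * ∑ k : Fin m, f l (S k))

/-- `η_F = sup_{f∈F} E_μ[f] - a`. -/
def etaF {X ι : Type*} [MeasurableSpace X] (f : ι → X → ℝ) (μ : Measure X) (a : ℝ) : ℝ :=
  (⨆ l : ι, ∫ x, f l x ∂μ) - a

/-- `γ_F = b - inf_{f∈F} E_μ[f]`. -/
def gammaF {X ι : Type*} [MeasurableSpace X] (f : ι → X → ℝ) (μ : Measure X) (b : ℝ) : ℝ :=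
  b - ⨅ l : ι, ∫ x, f l x ∂μ

/-- `η̂_F(S) = sup_{f∈F} (1/m) Σ_i f(s_i) - a`. -/
def etahat {X ι : Type*} (f : ι → X → ℝ) {m : ℕ} (S : Fin m → X) (a : ℝ) : ℝ :=
  (⨆ l : ι, (m : ℝ)⁻¹ * ∑ k : Fin m, f l (S k)) - a

/-- `γ̂_F(S) = b - sup_{f∈F} (1/m) Σ_i f(s_i)`. -/
def gammahat {X ι : Type*} (f : ι → X → ℝ) {m : ℕ} (S : Fin m → X) (b : ℝ) : ℝ :=
  b - ⨆ l : ι, (m : ℝ)⁻¹ * ∑ k : Fin m, f l (S k)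

/-- `h(x) = (1+x) ln(1+x) - x`. -/
def hfun (x : ℝ) : ℝ := (1 + x) * Real.log (1 + x) - x

/-- `g(σ) = n m R̂ⁿ_m(F,S,σ) = Σ_j sup_{f∈F} Σ_i σ_{j,i} f(s_i)`. -/
def gup {X ι : Type*} (f : ι → X → ℝ) {n m : ℕ} (S : Fin m → X)
    (σ : Fin n → Fin m → Bool) : ℝ :=
  ∑ j : Fin n, ⨆ l : ι, ∑ k : Fin m, sgnB (σ j k) * f l (S k)

/-- `g_{j,i}(σ)`: infimum over `σ'_{j,i} ∈ {-1,1}` of `g` evaluated at `σ` with its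
`(j,i)` entry replaced by `σ'_{j,i}`. -/
def gji {X ι : Type*} (f : ι → X → ℝ) {n m : ℕ} (S : Fin m → X)
    (σ : Fin n → Fin m → Bool) (j : Fin n) (i : Fin m) : ℝ :=
  min (gup f S (Function.update σ j (Function.update (σ j) i true)))
      (gup f S (Function.update σ j (Function.update (σ j) i false)))

/-- `g(S) = m SD⁺(F,S) = sup_{f∈F} (Σ_i f(s_i) - m E_μ[f])`. -/
def gSDp {X ι : Type*} [MeasurableSpace X] (f : ι → X → ℝ) (μ : Measure X)
    {m : ℕ} (S : Fin m → X) : ℝ :=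
  ⨆ l : ι, (∑ k : Fin m, f l (S k) - m * ∫ x, f l x ∂μ)

/-- `g_i(S) = inf_{s'_i ∈ X} g(s_1,…,s_{i-1},s'_i,s_{i+1},…,s_m)` for `g = m SD⁺`. -/
def gSDpi {X ι : Type*} [MeasurableSpace X] (f : ι → X → ℝ) (μ : Measure X)
    {m : ℕ} (S : Fin m → X) (i : Fin m) : ℝ :=
  ⨅ s' : X, gSDp f μ (Function.update S i s')

/-- `g(S) = m SD⁻(F,S) = sup_{f∈F} (m E_μ[f] - Σ_i f(s_i))`. -/
def gSDm {X ι : Type*} [MeasurableSpace X] (f : ι → X → ℝ) (μ : Measure X)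
    {m : ℕ} (S : Fin m → X) : ℝ :=
  ⨆ l : ι, ((m : ℝ) * (∫ x, f l x ∂μ) - ∑ k : Fin m, f l (S k))

/-- `g_i(S) = inf_{s'_i ∈ X} g(s_1,…,s_{i-1},s'_i,s_{i+1},…,s_m)` for `g = m SD⁻`. -/
def gSDmi {X ι : Type*} [MeasurableSpace X] (f : ι → X → ℝ) (μ : Measure X)
    {m : ℕ} (S : Fin m → X) (i : Fin m) : ℝ :=
  ⨅ s' : X, gSDm f μ (Function.update S i s')

/-- `g(S) = m σ̂²_F(S) = sup_{f∈F} Σ_i f(s_i)²`. -/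
def gWv {X ι : Type*} (f : ι → X → ℝ) {m : ℕ} (S : Fin m → X) : ℝ :=
  ⨆ l : ι, ∑ k : Fin m, (f l (S k)) ^ 2

/-- `g_j(S) = sup_{f∈F} Σ_{i≠j} f(s_i)²`. -/
def gWvj {X ι : Type*} (f : ι → X → ℝ) {m : ℕ} (S : Fin m → X) (j : Fin m) : ℝ :=
  ⨆ l : ι, ∑ k ∈ Finset.univ.erase j, (f l (S k)) ^ 2

/-!
For `S : κ → X` write `v_l(S) = c_l - ∑ k, f_l(s_k)`, where `c_l = m E[f_l]` in the application, and
`g = sup_l v_l`. Replacing `s_i` by `x` adds exactly `f_l(s_i) - f_l(x) ≥ f_l(s_i) - b` to `v_l`, so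
`v_l(S) - (b - f_l(s_i)) ≤ g_i(S)` for every `l`. A supremum over `l` bounds `g - g_i` by `b - a`.
Summing over `i` first makes `∑ k, f_l(s_k)` reappear, so that
`∑ i, (v_l(S) - g_i(S)) ≤ |κ| b - ∑ k, f_l(s_k) = v_l(S) + (|κ| b - c_l)`,
and a supremum over `l` then bounds the sum of the differences.
-/

section SupDeviation

variable {X ι κ : Type*}

/-- The infimum of `g` over all samples that differ from `S` at most in coordinate `i`: the `g_i` of
a self-bounding function `g`. -/
def resampleInf [DecidableEq κ] (g : (κ → X) → ℝ) (S : κ → X) (i : κ) : ℝ :=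
  ⨅ x, g (Function.update S i x)

variable [Fintype κ]

/-- The deviation `c_l - ∑ k, f_l(s_k)` of the sample sum of `f_l` below a reference value `c_l`,
which is `m E[f_l]` for the negative supremum deviation of an `m`-sample. -/
def deviation (c : ι → ℝ) (f : ι → X → ℝ) (S : κ → X) (l : ι) : ℝ :=
  c l - ∑ k, f l (S k)

/-- The supremum deviation `sup_l (c_l - ∑ k, f_l(s_k))`, with the junk value `0` if the
deviations are unbounded above. -/
def supDeviation (c : ι → ℝ) (f : ι → X → ℝ) (S : κ → X) : ℝ :=
  ⨆ l, deviation c f S l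

variable {c : ι → ℝ} {f : ι → X → ℝ} {a b : ℝ}

lemma bddAbove_range_deviation (hc : BddAbove (Set.range c)) (ha : ∀ l x, a ≤ f l x) (S : κ → X) :
    BddAbove (Set.range (deviation c f S)) := by
  obtain ⟨C, hC⟩ := hc
  refine ⟨C - Fintype.card κ * a, Set.forall_mem_range.2 fun l => ?_⟩
  have hsum : Fintype.card κ * a ≤ ∑ k, f l (S k) := by
    simpa using Finset.card_nsmul_le_sum Finset.univ (fun k => f l (S k)) a fun k _ => ha l (S k)
  exact sub_le_sub (hC ⟨l, rfl⟩) hsum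

variable [DecidableEq κ]

lemma sum_comp_update_sub_sum {M : Type*} [AddCommGroup M] (h : X → M) (S : κ → X) (i : κ) (x : X) :
    ∑ k, h (Function.update S i x k) - ∑ k, h (S k) = h x - h (S i) := by
  rw [← Finset.sum_sub_distrib, Fintype.sum_eq_single i fun k hk => by
    rw [Function.update_of_ne hk, sub_self], Function.update_self]

lemma deviation_update (S : κ → X) (i : κ) (x : X) (l : ι) :
    deviation c f (Function.update S i x) l = deviation c f S l - (f l x - f l (S i)) := by
  rw [← sum_comp_update_sub_sum (f l) S i x, deviation, deviation]
  ring

lemma deviation_sub_le_supDeviation_update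
    (hdev : ∀ S : κ → X, BddAbove (Set.range (deviation c f S))) (hb : ∀ l x, f l x ≤ b)
    (S : κ → X) (i : κ) (x : X) (l : ι) :
    deviation c f S l - (b - f l (S i)) ≤ supDeviation c f (Function.update S i x) :=
  calc deviation c f S l - (b - f l (S i))
      ≤ deviation c f S l - (f l x - f l (S i)) := by gcongr; exact hb l x
    _ = deviation c f (Function.update S i x) l := (deviation_update S i x l).symm
    _ ≤ supDeviation c f (Function.update S i x) := le_ciSup (hdev _) l

lemma deviation_sub_le_resampleInf
    (hdev : ∀ S : κ → X, BddAbove (Set.range (deviation c f S))) (hb : ∀ l x, f l x ≤ b)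
    (S : κ → X) (i : κ) (l : ι) :
    deviation c f S l - (b - f l (S i)) ≤ resampleInf (supDeviation c f) S i :=
  haveI : Nonempty X := ⟨S i⟩
  le_ciInf fun x => deviation_sub_le_supDeviation_update hdev hb S i x l

lemma sum_deviation_sub_resampleInf_le
    (hdev : ∀ S : κ → X, BddAbove (Set.range (deviation c f S))) (hb : ∀ l x, f l x ≤ b)
    (S : κ → X) (l : ι) :
    ∑ i, (deviation c f S l - resampleInf (supDeviation c f) S i)
      ≤ deviation c f S l + (Fintype.card κ * b - c l) :=
  calc ∑ i, (deviation c f S l - resampleInf (supDeviation c f) S i)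
      ≤ ∑ i, (b - f l (S i)) := Finset.sum_le_sum fun i _ =>
        sub_le_comm.1 (deviation_sub_le_resampleInf hdev hb S i l)
    _ = Fintype.card κ * b - ∑ i, f l (S i) := by simp
    _ = deviation c f S l + (Fintype.card κ * b - c l) := by rw [deviation]; ring

variable [Nonempty ι]

lemma resampleInf_supDeviation_le
    (hdev : ∀ S : κ → X, BddAbove (Set.range (deviation c f S))) (hb : ∀ l x, f l x ≤ b)
    (S : κ → X) (i : κ) :
    resampleInf (supDeviation c f) S i ≤ supDeviation c f S := by
  obtain ⟨l⟩ := ‹Nonempty ι›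
  have hbdd : BddBelow (Set.range fun x => supDeviation c f (Function.update S i x)) :=
    ⟨_, Set.forall_mem_range.2 fun x => deviation_sub_le_supDeviation_update hdev hb S i x l⟩
  simpa only [resampleInf, Function.update_eq_self] using ciInf_le hbdd (S i)

lemma supDeviation_sub_resampleInf_le
    (hdev : ∀ S : κ → X, BddAbove (Set.range (deviation c f S)))
    (hf : ∀ l x, f l x ∈ Set.Icc a b) (S : κ → X) (i : κ) :
    supDeviation c f S - resampleInf (supDeviation c f) S i ≤ b - a := by
  refine sub_le_iff_le_add.2 (ciSup_le fun l => ?_)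
  have hresample := deviation_sub_le_resampleInf hdev (fun l x => (hf l x).2) S i l
  linarith [(hf l (S i)).1]

lemma sum_supDeviation_sub_resampleInf_le
    (hdev : ∀ S : κ → X, BddAbove (Set.range (deviation c f S))) (hb : ∀ l x, f l x ≤ b)
    {r : ℝ} (hr : ∀ l, r ≤ c l) (S : κ → X) :
    ∑ i, (supDeviation c f S - resampleInf (supDeviation c f) S i)
      ≤ supDeviation c f S + (Fintype.card κ * b - r) := by
  have hdeviation (l : ι) : Fintype.card κ * deviation c f S l
      ≤ supDeviation c f S + (Fintype.card κ * b - r)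
        + ∑ i, resampleInf (supDeviation c f) S i := by
    rw [← sub_le_iff_le_add]
    calc Fintype.card κ * deviation c f S l - ∑ i, resampleInf (supDeviation c f) S i
        = ∑ i, (deviation c f S l - resampleInf (supDeviation c f) S i) := by simp
      _ ≤ deviation c f S l + (Fintype.card κ * b - c l) :=
        sum_deviation_sub_resampleInf_le hdev hb S l
      _ ≤ supDeviation c f S + (Fintype.card κ * b - r) := by
        gcongr
        · exact le_ciSup (hdev S) l
        · exact hr l
  have hsup : Fintype.card κ * supDeviation c f S
      ≤ supDeviation c f S + (Fintype.card κ * b - r)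
        + ∑ i, resampleInf (supDeviation c f) S i := by
    conv_lhs => rw [supDeviation, Real.mul_iSup_of_nonneg (Nat.cast_nonneg _)]
    exact ciSup_le hdeviation
  simpa using sub_le_iff_le_add.2 hsup

end SupDeviation

lemma integral_mem_Icc {X : Type*} [MeasurableSpace X] {μ : Measure X} [IsProbabilityMeasure μ]
    {f : X → ℝ} {a b : ℝ} (hmeas : AEMeasurable f μ) (hf : ∀ᵐ x ∂μ, f x ∈ Set.Icc a b) :
    ∫ x, f x ∂μ ∈ Set.Icc a b :=
  (convex_Icc a b).integral_mem isClosed_Icc hf (Integrable.of_mem_Icc a b hmeas hf)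

theorem stmt_14_general {X : Type*} [MeasurableSpace X] {ι : Type*} [Nonempty ι]
    (f : ι → X → ℝ) (a b : ℝ) (μ : Measure X) [IsProbabilityMeasure μ]
    (hmeas : ∀ l, AEMeasurable (f l) μ) (hrange : ∀ l x, f l x ∈ Set.Icc a b) (m : ℕ) :
    (∀ (S : Fin m → X) (i : Fin m),
        0 ≤ gSDm f μ S - gSDmi f μ S i ∧ gSDm f μ S - gSDmi f μ S i ≤ b - a) ∧
    ∀ S : Fin m → X,
      ∑ i : Fin m, (gSDm f μ S - gSDmi f μ S i) ≤ gSDm f μ S + (m : ℝ) * gammaF f μ b := by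
  let c (l : ι) : ℝ := m * ∫ x, f l x ∂μ
  have hmean (l : ι) : ∫ x, f l x ∂μ ∈ Set.Icc a b :=
    integral_mem_Icc (hmeas l) (.of_forall (hrange l))
  have hc : BddAbove (Set.range c) :=
    ⟨m * b, Set.forall_mem_range.2 fun l =>
      mul_le_mul_of_nonneg_left (hmean l).2 m.cast_nonneg⟩
  have hinf (l : ι) : m * ⨅ l', ∫ x, f l' x ∂μ ≤ c l :=
    mul_le_mul_of_nonneg_left
      (ciInf_le ⟨a, Set.forall_mem_range.2 fun l' => (hmean l').1⟩ l) m.cast_nonneg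
  have hdev (S : Fin m → X) : BddAbove (Set.range (deviation c f S)) :=
    bddAbove_range_deviation hc (fun l x => (hrange l x).1) S
  have hb (l : ι) (x : X) : f l x ≤ b := (hrange l x).2
  refine ⟨fun S i => ⟨sub_nonneg.2 (resampleInf_supDeviation_le hdev hb S i),
    supDeviation_sub_resampleInf_le hdev hrange S i⟩, fun S => ?_⟩
  simpa only [gammaF, mul_sub, Fintype.card_fin] using!
    sum_supDeviation_sub_resampleInf_le hdev hb hinf S

theorem stmt_14 {X : Type*} [MeasurableSpace X] {ι : Type*} [Countable ι]
    (f : ι → X → ℝ) (a b : ℝ) (ha : a ≤ 0) (hb : 0 < b)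
    (hmeas : ∀ l : ι, Measurable (f l))
    (hrange : ∀ (l : ι) (x : X), f l x ∈ Set.Icc a b)
    (hzero : ∃ l₀ : ι, ∀ x : X, f l₀ x = 0)
    (μ : Measure X) [IsProbabilityMeasure μ] (hc : b - a ≤ 1) (m : ℕ) :
    (∀ (S : Fin m → X) (i : Fin m),
        0 ≤ gSDm f μ S - gSDmi f μ S i ∧ gSDm f μ S - gSDmi f μ S i ≤ 1) ∧
    ∀ S : Fin m → X,
      ∑ i : Fin m, (gSDm f μ S - gSDmi f μ S i) ≤ gSDm f μ S + (m : ℝ) * gammaF f μ b := by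
  have : Nonempty ι := hzero.nonempty
  obtain ⟨hdiff, hsum⟩ := stmt_14_general f a b μ (fun l => (hmeas l).aemeasurable) hrange m
  exact ⟨fun S i => ⟨(hdiff S i).1, (hdiff S i).2.trans hc⟩, hsum⟩
end
end

section
/- Let S = (s_1,…,s_m) be m i.i.d. samples from μ and let Z = SD⁺(F,S) = sup_{f∈F} { (1/m) Σ_{i=1}^m f(s_i) − E_μ[f] }. Then for every ε > 0, Pr_S( Z ≥ E_S[Z] + ε ) ≤ exp( − m ε² / ( 2 c ( E_S[Z] + η_F + ε/3 ) ) ). Consequently, for every δ ∈ (0,1), with probability at least 1 − δ over S, Z ≤ E_S[Z] + sqrt( ( c ln(1/δ)/(3m) )² + 2 c ln(1/δ) ( E_S[Z] + η_F ) / m ) + c ln(1/δ)/(3m). -/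
/-!
With `c = b - a`, the function `W = (m / c) * (SD⁺ + η_F)` of the sample is self-bounding: it is a
supremum of sums of terms in `[0, 1]` and nonnegative constants, so omitting the `i`-th term lowers
it by an amount in `[0, 1]`, and these amounts add up to at most `W`. Tensorizing the entropy of
`exp (r * W)` over the independent samples turns this into the differential inequality
`(1 - exp (-r)) * L' r ≤ L r` for the cumulant generating function `L` of `W`. Hence
`L r / (exp r - 1)` is antitone, with limit `E[W]` at `0`, which gives the Poisson bound
`L r ≤ (exp r - 1) * E[W]`. Chernoff's method converts it into a Bernstein tail for `W`, and so for
`SD⁺`. The quantile bound comes from solving the quadratic equation for the deviation at which the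
tail equals `δ`.
-/

open MeasureTheory

noncomputable section

open ProbabilityTheory Filter Topology Real Set

/-! ### The entropy functional -/

/-- Young's inequality for the convex conjugates `y log y - y` and `exp`, rescaled by `t`. -/
theorem mul_le_mul_log_sub_add_mul_exp {y t : ℝ} (hy : 0 ≤ y) (ht : 0 < t) (u : ℝ) :
    y * u ≤ y * log y - y * log t - y + t * exp u := by
  rcases hy.eq_or_lt with rfl | hy
  · simpa using (mul_pos ht (exp_pos u)).le
  · have h : y * (log t + u - log y + 1) ≤ y * exp (log t + u - log y) :=
      mul_le_mul_of_nonneg_left (add_one_le_exp _) hy.le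
    rw [exp_sub, exp_add, exp_log ht, exp_log hy, mul_div_cancel₀ _ hy.ne'] at h
    linarith

/-- The entropy `Ent_P(Y) = E[Y log Y] - E[Y] log E[Y]` of a nonnegative random variable. -/
def functionalEntropy {Ω : Type*} [MeasurableSpace Ω] (P : Measure Ω) (Y : Ω → ℝ) : ℝ :=
  ∫ ω, Y ω * log (Y ω) ∂P - (∫ ω, Y ω ∂P) * log (∫ ω, Y ω ∂P)

theorem functionalEntropy_comp_measurePreserving {Ω Ω' : Type*} [MeasurableSpace Ω]
    [MeasurableSpace Ω'] {P : Measure Ω} {Q : Measure Ω'} {f : Ω → Ω'}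
    (hf : MeasurePreserving f P Q) {Y : Ω' → ℝ} (hY : Measurable Y) :
    functionalEntropy P (fun ω => Y (f ω)) = functionalEntropy Q Y := by
  have hmap (g : Ω' → ℝ) (hg : Measurable g) : ∫ ω, g (f ω) ∂P = ∫ ω, g ω ∂Q := by
    rw [← hf.map_eq, integral_map hf.measurable.aemeasurable hg.aestronglyMeasurable]
  rw [functionalEntropy, functionalEntropy, hmap Y hY,
    hmap (fun ω => Y ω * log (Y ω)) (hY.mul hY.log)]

theorem integrable_comp_of_mem_Icc {Ω : Type*} [MeasurableSpace Ω] {P : Measure Ω}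
    [IsFiniteMeasure P] {g : ℝ → ℝ} (hg : Continuous g) {Y : Ω → ℝ} (hY : Measurable Y)
    {α β : ℝ} (hmem : ∀ ω, Y ω ∈ Icc α β) : Integrable (fun ω => g (Y ω)) P := by
  obtain ⟨C, hC⟩ := isCompact_Icc.exists_bound_of_continuousOn (hg.continuousOn (s := Icc α β))
  exact .of_bound (hg.measurable.comp hY).aestronglyMeasurable C (.of_forall fun ω => hC _ (hmem ω))

theorem integrable_mul_of_mem_Icc {Ω : Type*} [MeasurableSpace Ω] {P : Measure Ω}
    [IsFiniteMeasure P] {Y U : Ω → ℝ} (hY : Measurable Y) (hU : Measurable U) {α β γ δ : ℝ}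
    (hYmem : ∀ ω, Y ω ∈ Icc α β) (hUmem : ∀ ω, U ω ∈ Icc γ δ) :
    Integrable (fun ω => Y ω * U ω) P :=
  (Integrable.of_mem_Icc γ δ hU.aemeasurable (.of_forall hUmem)).bdd_mul hY.aestronglyMeasurable
    (.of_forall fun ω => abs_le_max_abs_abs (hYmem ω).1 (hYmem ω).2)

theorem integral_mem_Icc_s15 {Ω : Type*} [MeasurableSpace Ω] {P : Measure Ω} [IsProbabilityMeasure P]
    {Y : Ω → ℝ} (hY : Measurable Y) {α β : ℝ} (hmem : ∀ ω, Y ω ∈ Icc α β) :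
    ∫ ω, Y ω ∂P ∈ Icc α β := by
  have hint : Integrable Y P := .of_mem_Icc α β hY.aemeasurable (.of_forall hmem)
  constructor
  · simpa using integral_mono (integrable_const α) hint fun ω => (hmem ω).1
  · simpa using integral_mono hint (integrable_const β) fun ω => (hmem ω).2

/-- One half of the duality formula `Ent_P(Y) = sup {E[Y U] | E[exp U] ≤ 1}`. -/
theorem integral_mul_le_functionalEntropy {Ω : Type*} [MeasurableSpace Ω] {P : Measure Ω}
    {Y U : Ω → ℝ} (hY : 0 ≤ Y) (hpos : 0 < ∫ ω, Y ω ∂P) (hYint : Integrable Y P)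
    (hYlog : Integrable (fun ω => Y ω * log (Y ω)) P)
    (hYU : Integrable (fun ω => Y ω * U ω) P) (hexp : Integrable (fun ω => exp (U ω)) P)
    (hU : ∫ ω, exp (U ω) ∂P ≤ 1) : ∫ ω, Y ω * U ω ∂P ≤ functionalEntropy P Y := by
  set E := ∫ ω, Y ω ∂P
  have hYE : Integrable (fun ω => Y ω * log E) P := hYint.mul_const _
  have hdiff : Integrable (fun ω => Y ω * log (Y ω) - Y ω * log E) P := hYlog.sub hYE
  have hdiff' : Integrable (fun ω => Y ω * log (Y ω) - Y ω * log E - Y ω) P := hdiff.sub hYint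
  calc ∫ ω, Y ω * U ω ∂P
      ≤ ∫ ω, (Y ω * log (Y ω) - Y ω * log E - Y ω + E * exp (U ω)) ∂P :=
        integral_mono hYU (hdiff'.add (hexp.const_mul E))
          fun ω => mul_le_mul_log_sub_add_mul_exp (hY ω) hpos (U ω)
    _ = functionalEntropy P Y - E + E * ∫ ω, exp (U ω) ∂P := by
        rw [integral_add hdiff' (hexp.const_mul E), integral_sub hdiff hYint,
          integral_sub hYlog hYE, integral_mul_const, integral_const_mul, functionalEntropy]
    _ ≤ functionalEntropy P Y := by linarith [mul_le_mul_of_nonneg_left hU hpos.le]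

section Entropy

variable {Ω Ω' : Type*} [MeasurableSpace Ω] [MeasurableSpace Ω']
  {P : Measure Ω} [IsProbabilityMeasure P] {Q : Measure Ω'} [IsProbabilityMeasure Q]

theorem functionalEntropy_le_integral {Y : Ω → ℝ} (hY : 0 ≤ Y) (hYint : Integrable Y P)
    (hYlog : Integrable (fun ω => Y ω * log (Y ω)) P) {t : ℝ} (ht : 0 < t) :
    functionalEntropy P Y ≤ ∫ ω, (Y ω * log (Y ω) - Y ω * log t - Y ω + t) ∂P := by
  have hYt : Integrable (fun ω => Y ω * log t) P := hYint.mul_const _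
  have hdiff : Integrable (fun ω => Y ω * log (Y ω) - Y ω * log t) P := hYlog.sub hYt
  have hdiff' : Integrable (fun ω => Y ω * log (Y ω) - Y ω * log t - Y ω) P := hdiff.sub hYint
  have young := mul_le_mul_log_sub_add_mul_exp (integral_nonneg hY : 0 ≤ ∫ ω, Y ω ∂P) ht 0
  rw [integral_add hdiff' (integrable_const t), integral_sub hdiff hYint,
    integral_sub hYlog hYt, integral_mul_const, functionalEntropy]
  simp only [mul_zero, exp_zero, mul_one, integral_const, probReal_univ, one_smul] at young ⊢
  linarith

section Prod

variable {Y : Ω × Ω' → ℝ} {α β : ℝ} (hY : Measurable Y) (hα : 0 < α)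
  (hmem : ∀ p, Y p ∈ Icc α β)

include hY hmem

theorem integrable_functionalEntropy_prod_left :
    Integrable (fun x => functionalEntropy Q fun y => Y (x, y)) P := by
  have hM : Measurable fun x => ∫ y, Y (x, y) ∂Q :=
    hY.stronglyMeasurable.integral_prod_right'.measurable
  exact (integrable_comp_of_mem_Icc continuous_mul_log hY hmem).integral_prod_left.sub
    (integrable_comp_of_mem_Icc continuous_mul_log hM fun x =>
      integral_mem_Icc_s15 (hY.comp measurable_prodMk_left) fun y => hmem (x, y))

theorem functionalEntropy_prod_eq :
    functionalEntropy (P.prod Q) Y = ∫ x, functionalEntropy Q (fun y => Y (x, y)) ∂P +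
      functionalEntropy P fun x => ∫ y, Y (x, y) ∂Q := by
  have hM : Measurable fun x => ∫ y, Y (x, y) ∂Q :=
    hY.stronglyMeasurable.integral_prod_right'.measurable
  have hYlog : Integrable (fun p => Y p * log (Y p)) (P.prod Q) :=
    integrable_comp_of_mem_Icc continuous_mul_log hY hmem
  have hMlog : Integrable (fun x => (∫ y, Y (x, y) ∂Q) * log (∫ y, Y (x, y) ∂Q)) P :=
    integrable_comp_of_mem_Icc continuous_mul_log hM fun x =>
      integral_mem_Icc_s15 (hY.comp measurable_prodMk_left) fun y => hmem (x, y)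
  have hYint : Integrable Y (P.prod Q) := .of_mem_Icc α β hY.aemeasurable (.of_forall hmem)
  simp only [functionalEntropy]
  rw [integral_sub hYlog.integral_prod_left hMlog, integral_prod _ hYlog, integral_prod _ hYint]
  ring

include hα

theorem integral_integral_mul_le_integral_functionalEntropy {U : Ω → ℝ} (hU : Measurable U)
    {γ δ : ℝ} (hUmem : ∀ x, U x ∈ Icc γ δ) (hexpU : ∫ x, exp (U x) ∂P ≤ 1) :
    ∫ x, (∫ y, Y (x, y) ∂Q) * U x ∂P ≤ ∫ y, functionalEntropy P (fun x => Y (x, y)) ∂Q := by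
  have hYU : Integrable (fun p : Ω × Ω' => Y p * U p.1) (P.prod Q) :=
    integrable_mul_of_mem_Icc hY (hU.comp measurable_fst) hmem fun p => hUmem p.1
  have hslice (y) : ∫ x, Y (x, y) * U x ∂P ≤ functionalEntropy P fun x => Y (x, y) := by
    have hYy : Measurable fun x => Y (x, y) := hY.comp measurable_prodMk_right
    have hYmem (x) : Y (x, y) ∈ Icc α β := hmem (x, y)
    exact integral_mul_le_functionalEntropy (fun x => hα.le.trans (hYmem x).1)
      (hα.trans_le (integral_mem_Icc_s15 hYy hYmem).1)
      (.of_mem_Icc α β hYy.aemeasurable (.of_forall hYmem))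
      (integrable_comp_of_mem_Icc continuous_mul_log hYy hYmem)
      (integrable_mul_of_mem_Icc hYy hU hYmem hUmem)
      (integrable_comp_of_mem_Icc continuous_exp hU hUmem) hexpU
  calc ∫ x, (∫ y, Y (x, y) ∂Q) * U x ∂P
      = ∫ y, ∫ x, Y (x, y) * U x ∂P ∂Q := by
        rw [← integral_prod_symm _ hYU, integral_prod _ hYU]
        simp only [integral_mul_const]
    _ ≤ ∫ y, functionalEntropy P (fun x => Y (x, y)) ∂Q :=
        integral_mono hYU.integral_prod_right
          (integrable_functionalEntropy_prod_left (hY.comp measurable_swap) fun p => hmem p.swap)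
          hslice

/-- Convexity of the entropy: the log-density `U = log (M / E[M])` of the average `M` attains the
supremum in the duality formula for `M`, and is admissible for every slice of `Y`. -/
theorem functionalEntropy_integral_le_integral_functionalEntropy :
    functionalEntropy P (fun x => ∫ y, Y (x, y) ∂Q) ≤
      ∫ y, functionalEntropy P (fun x => Y (x, y)) ∂Q := by
  set M : Ω → ℝ := fun x => ∫ y, Y (x, y) ∂Q
  set E : ℝ := ∫ x, M x ∂P
  have hM : Measurable M := hY.stronglyMeasurable.integral_prod_right'.measurable
  have hMmem (x) : M x ∈ Icc α β :=
    integral_mem_Icc_s15 (hY.comp measurable_prodMk_left) fun y => hmem (x, y)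
  have hMpos (x) : 0 < M x := hα.trans_le (hMmem x).1
  have hEpos : 0 < E := hα.trans_le (integral_mem_Icc_s15 hM hMmem).1
  have hMint : Integrable M P := .of_mem_Icc α β hM.aemeasurable (.of_forall hMmem)
  have hMlog : Integrable (fun x => M x * log (M x)) P :=
    integrable_comp_of_mem_Icc continuous_mul_log hM hMmem
  have hUmem (x) : log (M x) - log E ∈ Icc (log α - log E) (log β - log E) :=
    ⟨sub_le_sub_right (log_le_log hα (hMmem x).1) _,
      sub_le_sub_right (log_le_log (hMpos x) (hMmem x).2) _⟩
  have hexpU : ∫ x, exp (log (M x) - log E) ∂P = 1 := by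
    simp only [exp_sub, exp_log (hMpos _), exp_log hEpos, integral_div]
    exact div_self hEpos.ne'
  calc functionalEntropy P M
      = ∫ x, M x * (log (M x) - log E) ∂P := by
        simp only [mul_sub]
        rw [integral_sub hMlog (hMint.mul_const _), integral_mul_const, functionalEntropy]
    _ ≤ ∫ y, functionalEntropy P (fun x => Y (x, y)) ∂Q :=
        integral_integral_mul_le_integral_functionalEntropy hY hα hmem (hM.log.sub_const _)
          hUmem hexpU.le

theorem functionalEntropy_prod_le :
    functionalEntropy (P.prod Q) Y ≤ ∫ x, functionalEntropy Q (fun y => Y (x, y)) ∂P +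
      ∫ y, functionalEntropy P (fun x => Y (x, y)) ∂Q := by
  rw [functionalEntropy_prod_eq hY hmem]
  gcongr
  exact functionalEntropy_integral_le_integral_functionalEntropy hY hα hmem

end Prod

end Entropy

/-! ### Tensorization of entropy -/

theorem update_piOptionEquivProd_symm_none {ι : Type*} [DecidableEq ι] {X : Option ι → Type*}
    [∀ i, MeasurableSpace (X i)] (x : ∀ i, X (some i)) (y z : X none) :
    Function.update ((MeasurableEquiv.piOptionEquivProd X).symm (x, y)) none z =
      (MeasurableEquiv.piOptionEquivProd X).symm (x, z) := by
  ext i; cases i <;> rfl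

theorem update_piOptionEquivProd_symm_some {ι : Type*} [DecidableEq ι] {X : Option ι → Type*}
    [∀ i, MeasurableSpace (X i)] (x : ∀ i, X (some i)) (y : X none) (i : ι) (z : X (some i)) :
    Function.update ((MeasurableEquiv.piOptionEquivProd X).symm (x, y)) (some i) z =
      (MeasurableEquiv.piOptionEquivProd X).symm (Function.update x i z, y) := by
  ext j
  rcases j with _ | j
  · rfl
  · rcases eq_or_ne j i with rfl | hj
    · rw [Function.update_self]
      exact (Function.update_self j z x).symm
    · rw [Function.update_of_ne ((Option.some_injective ι).ne hj)]
      exact (Function.update_of_ne hj z x).symm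

section Tensorization

variable {ι : Type*} [Fintype ι] [DecidableEq ι] {X : ι → Type*} [∀ i, MeasurableSpace (X i)]

theorem measurePreserving_update (μ : ∀ i, Measure (X i)) [∀ i, IsProbabilityMeasure (μ i)]
    (i : ι) : MeasurePreserving (fun p : (∀ j, X j) × X i => Function.update p.1 i p.2)
      ((Measure.pi μ).prod (μ i)) (Measure.pi μ) where
  measurable := measurable_update'
  map_eq := by
    refine (Measure.pi_eq fun s hs => ?_).symm
    have hpreimage : (fun p : (∀ j, X j) × X i => Function.update p.1 i p.2) ⁻¹' univ.pi s =
        univ.pi (Function.update s i univ) ×ˢ s i := by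
      ext p
      simp only [mem_preimage, mem_univ_pi, mem_prod]
      refine ⟨fun h => ⟨fun j => ?_, by simpa using h i⟩, fun h j => ?_⟩ <;>
        rcases eq_or_ne j i with rfl | hj
      · simp
      · simpa [hj] using h j
      · simpa using h.2
      · simpa [hj] using h.1 j
    rw [Measure.map_apply measurable_update' (.univ_pi hs), hpreimage, Measure.prod_prod,
      Measure.pi_pi, ← Finset.prod_erase_mul _ _ (Finset.mem_univ i), Function.update_self,
      measure_univ, mul_one, ← Finset.prod_erase_mul _ _ (Finset.mem_univ i)]
    congr 1
    exact Finset.prod_congr rfl fun j hj => by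
      rw [Function.update_of_ne (Finset.ne_of_mem_erase hj)]

theorem integrable_functionalEntropy_update (μ : ∀ i, Measure (X i))
    [∀ i, IsProbabilityMeasure (μ i)] {Y : (∀ i, X i) → ℝ} (hY : Measurable Y) {α β : ℝ}
    (hmem : ∀ x, Y x ∈ Icc α β) (i : ι) :
    Integrable (fun x => functionalEntropy (μ i) fun y => Y (Function.update x i y))
      (Measure.pi μ) :=
  integrable_functionalEntropy_prod_left (hY.comp measurable_update') fun _ => hmem _

/-- Subadditivity of the entropy under the product of the `μ i`: the entropy of `Y` is at most the
sum of the mean entropies of `Y` in each coordinate separately. -/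
def EntropySubadditive (μ : ∀ i, Measure (X i)) : Prop :=
  ∀ ⦃Y : (∀ i, X i) → ℝ⦄ ⦃α β : ℝ⦄, Measurable Y → 0 < α → (∀ x, Y x ∈ Icc α β) →
    functionalEntropy (Measure.pi μ) Y ≤
      ∑ i, ∫ x, functionalEntropy (μ i) (fun y => Y (Function.update x i y)) ∂Measure.pi μ

theorem entropySubadditive_of_isEmpty [IsEmpty ι] (μ : ∀ i, Measure (X i)) :
    EntropySubadditive μ := by
  intro Y α β _ _ _
  have hconst : Y = fun _ => Y isEmptyElim := funext fun x => congrArg Y (Subsingleton.elim _ _)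
  have (i : ι) : IsProbabilityMeasure (μ i) := isEmptyElim i
  rw [hconst, functionalEntropy]
  simp

theorem EntropySubadditive.of_equiv {κ : Type*} [Fintype κ] [DecidableEq κ] (e : κ ≃ ι)
    {μ : ∀ i, Measure (X i)} [∀ i, IsProbabilityMeasure (μ i)]
    (h : EntropySubadditive fun k => μ (e k)) : EntropySubadditive μ := by
  intro Y α β hY hα hmem
  have hΦ := measurePreserving_piCongrLeft μ e
  set Φ := MeasurableEquiv.piCongrLeft X e
  have hupdate (x : ∀ k, X (e k)) (k : κ) (y : X (e k)) :
      Φ (Function.update x k y) = Function.update (Φ x) (e k) y := by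
    ext i
    obtain ⟨j, rfl⟩ := e.surjective i
    rw [MeasurableEquiv.piCongrLeft_apply_apply]
    rcases eq_or_ne j k with rfl | hj
    · simp only [Function.update_self]
    · rw [Function.update_of_ne hj, Function.update_of_ne (e.injective.ne hj),
        MeasurableEquiv.piCongrLeft_apply_apply]
  rw [← functionalEntropy_comp_measurePreserving hΦ hY, ← e.sum_comp]
  refine (h (hY.comp Φ.measurable) hα fun x => hmem _).trans_eq
    (Finset.sum_congr rfl fun k _ => ?_)
  rw [← hΦ.integral_comp']
  simp only [Function.comp_apply, hupdate]

theorem EntropySubadditive.option {X : Option ι → Type*} [∀ i, MeasurableSpace (X i)]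
    {μ : ∀ i, Measure (X i)} [∀ i, IsProbabilityMeasure (μ i)]
    (h : EntropySubadditive fun i => μ (some i)) : EntropySubadditive μ := by
  intro Y α β hY hα hmem
  set P := Measure.pi fun i => μ (some i)
  set Φ := (MeasurableEquiv.piOptionEquivProd X).symm
  have hΦ : MeasurePreserving Φ (P.prod (μ none)) (Measure.pi μ) :=
    ⟨Φ.measurable, Measure.pi_map_piOptionEquivProd μ⟩
  have hslice (i) : Integrable
      (fun p => functionalEntropy (μ i) fun z => Y (Function.update (Φ p) i z)) (P.prod (μ none)) :=
    hΦ.integrable_comp_of_integrable (integrable_functionalEntropy_update μ hY hmem i)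
  have hsum : ∫ y, functionalEntropy P (fun x => Y (Φ (x, y))) ∂μ none ≤
      ∑ i, ∫ w, functionalEntropy (μ (some i)) (fun z => Y (Function.update w (some i) z))
        ∂Measure.pi μ := by
    have hint (i : ι) := (hslice (some i)).integral_prod_right
    calc ∫ y, functionalEntropy P (fun x => Y (Φ (x, y))) ∂μ none
        ≤ ∫ y, ∑ i, ∫ x, functionalEntropy (μ (some i))
            (fun z => Y (Function.update (Φ (x, y)) (some i) z)) ∂P ∂μ none := by
          refine integral_mono (integrable_functionalEntropy_prod_left
            (hY.comp (Φ.measurable.comp measurable_swap)) fun _ => hmem _)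
            (integrable_finsetSum _ fun i _ => hint i) fun y => ?_
          simp only [Φ, update_piOptionEquivProd_symm_some]
          exact h (hY.comp (Φ.measurable.comp measurable_prodMk_right)) hα fun x => hmem _
      _ = _ := by
          rw [integral_finsetSum _ fun i _ => hint i]
          refine Finset.sum_congr rfl fun i _ => ?_
          rw [← hΦ.integral_comp', integral_prod_symm _ (hslice (some i))]
  rw [← functionalEntropy_comp_measurePreserving hΦ hY, Fintype.sum_option,
    ← hΦ.integral_comp', integral_prod _ (hslice none)]
  simp only [Φ, update_piOptionEquivProd_symm_none, integral_const, probReal_univ, one_smul]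
  exact (functionalEntropy_prod_le (hY.comp Φ.measurable) hα fun _ => hmem _).trans
    (add_le_add_right hsum _)

theorem entropySubadditive (μ : ∀ i, Measure (X i)) [∀ i, IsProbabilityMeasure (μ i)] :
    EntropySubadditive μ := by
  revert X
  refine Fintype.induction_empty_option (P := fun ι _ => ∀ [DecidableEq ι] {X : ι → Type _}
    [∀ i, MeasurableSpace (X i)] (μ : ∀ i, Measure (X i)) [∀ i, IsProbabilityMeasure (μ i)],
    EntropySubadditive μ) ?_ ?_ ?_ ι
  · intro κ ι _ e h _ X _ μ _
    classical
    let := Fintype.ofEquiv ι e.symm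
    exact .of_equiv e (h _)
  · intro _ X _ μ _
    exact entropySubadditive_of_isEmpty μ
  · intro ι _ h hdec X _ μ _
    classical
    convert! EntropySubadditive.option (h fun i => μ (some i))

/-- Modified logarithmic Sobolev inequality: the entropy in each coordinate is bounded by its
variational upper bound at a point `exp (T i x)` not depending on that coordinate. -/
theorem functionalEntropy_exp_pi_le (μ : ∀ i, Measure (X i)) [∀ i, IsProbabilityMeasure (μ i)]
    {V : (∀ i, X i) → ℝ} (hV : Measurable V) {α β : ℝ} (hmem : ∀ x, V x ∈ Icc α β)
    {T : ι → (∀ i, X i) → ℝ} (hT : ∀ i x y, T i (Function.update x i y) = T i x)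
    (hint : ∀ i, Integrable
      (fun x => exp (V x) * (exp (T i x - V x) - (T i x - V x) - 1)) (Measure.pi μ)) :
    functionalEntropy (Measure.pi μ) (fun x => exp (V x)) ≤
      ∑ i, ∫ x, exp (V x) * (exp (T i x - V x) - (T i x - V x) - 1) ∂Measure.pi μ := by
  have hexpmem (x) : exp (V x) ∈ Icc (exp α) (exp β) :=
    ⟨exp_le_exp.2 (hmem x).1, exp_le_exp.2 (hmem x).2⟩
  refine (entropySubadditive μ hV.exp (exp_pos α) hexpmem).trans
    (Finset.sum_le_sum fun i _ => ?_)
  set g : (∀ i, X i) → ℝ := fun x => exp (V x) * (exp (T i x - V x) - (T i x - V x) - 1)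
  have hupdate := measurePreserving_update μ i
  have hgint : Integrable (fun p : (∀ j, X j) × X i => g (Function.update p.1 i p.2))
      ((Measure.pi μ).prod (μ i)) := hupdate.integrable_comp_of_integrable (hint i)
  have hslice (x) : functionalEntropy (μ i) (fun y => exp (V (Function.update x i y))) ≤
      ∫ y, g (Function.update x i y) ∂μ i := by
    have hVx : Measurable fun y => exp (V (Function.update x i y)) :=
      (hV.comp (measurable_update x)).exp
    refine (functionalEntropy_le_integral (fun y => (exp_pos _).le)
      (.of_mem_Icc _ _ hVx.aemeasurable (.of_forall fun y => hexpmem _))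
      (integrable_comp_of_mem_Icc continuous_mul_log hVx fun y => hexpmem _)
      (exp_pos (T i x))).trans_eq (integral_congr_ae (.of_forall fun y => ?_))
    simp only [g, hT, log_exp, exp_sub]
    field_simp
    ring
  calc ∫ x, functionalEntropy (μ i) (fun y => exp (V (Function.update x i y))) ∂Measure.pi μ
      ≤ ∫ x, ∫ y, g (Function.update x i y) ∂μ i ∂Measure.pi μ :=
        integral_mono (integrable_functionalEntropy_update μ hV.exp hexpmem i)
          hgint.integral_prod_left hslice
    _ = ∫ x, g x ∂Measure.pi μ := by
        rw [← integral_prod _ hgint, ← integral_map hupdate.measurable.aemeasurable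
          (by rw [hupdate.map_eq]; exact (hint i).aestronglyMeasurable), hupdate.map_eq]

end Tensorization

/-! ### From a differential inequality to a Bernstein bound -/

theorem antitoneOn_div_exp_sub_one {L : ℝ → ℝ} (hL : DifferentiableOn ℝ L (Ioi 0))
    (hle : ∀ t > 0, (1 - exp (-t)) * deriv L t ≤ L t) :
    AntitoneOn (fun t => L t / (exp t - 1)) (Ioi 0) := by
  have hderiv (t : ℝ) (ht : 0 < t) : HasDerivAt (fun t => L t / (exp t - 1))
      ((deriv L t * (exp t - 1) - L t * exp t) / (exp t - 1) ^ 2) t :=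
    ((hL.differentiableAt (Ioi_mem_nhds ht)).hasDerivAt).div
      ((Real.hasDerivAt_exp t).sub_const 1) (sub_pos.2 (one_lt_exp_iff.2 ht)).ne'
  refine antitoneOn_of_deriv_nonpos (convex_Ioi 0)
    (fun t ht => (hderiv t ht).continuousAt.continuousWithinAt) ?_ ?_ <;> rw [interior_Ioi]
  · exact fun t ht => (hderiv t ht).differentiableAt.differentiableWithinAt
  · intro t ht
    have hexp : exp (-t) * exp t = 1 := by rw [← exp_add, neg_add_cancel, exp_zero]
    have hmul := mul_le_mul_of_nonneg_right (hle t ht) (exp_pos t).le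
    rw [(hderiv t ht).deriv]
    exact div_nonpos_of_nonpos_of_nonneg (by linear_combination hmul + deriv L t * hexp)
      (sq_nonneg _)

theorem tendsto_div_exp_sub_one {L : ℝ → ℝ} {v : ℝ} (hL0 : L 0 = 0)
    (hv : HasDerivWithinAt L v (Ioi 0) 0) :
    Tendsto (fun t => L t / (exp t - 1)) (𝓝[>] 0) (𝓝 v) := by
  have hslopes := ((hasDerivWithinAt_iff_tendsto_slope' self_notMem_Ioi).1 hv).div
    ((hasDerivWithinAt_iff_tendsto_slope' self_notMem_Ioi).1
      (Real.hasDerivAt_exp 0).hasDerivWithinAt) (exp_pos 0).ne'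
  rw [exp_zero, div_one] at hslopes
  refine hslopes.congr' ?_
  filter_upwards [self_mem_nhdsWithin] with t ht
  rw [Pi.div_apply, slope_def_field, slope_def_field, hL0, exp_zero, sub_zero, sub_zero,
    div_div_div_cancel_right₀ ht.ne']

theorem le_exp_sub_one_mul_of_deriv_le {L : ℝ → ℝ} {v : ℝ} (hL0 : L 0 = 0)
    (hv : HasDerivWithinAt L v (Ioi 0) 0) (hL : DifferentiableOn ℝ L (Ioi 0))
    (hle : ∀ t > 0, (1 - exp (-t)) * deriv L t ≤ L t) {r : ℝ} (hr : 0 < r) :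
    L r ≤ (exp r - 1) * v := by
  have hquot : L r / (exp r - 1) ≤ v := by
    refine ge_of_tendsto (tendsto_div_exp_sub_one hL0 hv) ?_
    filter_upwards [Ioo_mem_nhdsGT hr] with t ht
    exact antitoneOn_div_exp_sub_one hL hle ht.1 hr ht.2.le
  rwa [div_le_iff₀' (sub_pos.2 (one_lt_exp_iff.2 hr))] at hquot

/-- Comparison of the exponential series with a geometric one, using `2 * 3 ^ n ≤ (n + 2)!`. -/
theorem exp_sub_sub_one_le_sq_div {x : ℝ} (hx : 0 ≤ x) (hx3 : x < 3) :
    exp x - x - 1 ≤ x ^ 2 / 2 * (1 - x / 3)⁻¹ := by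
  have hexp : HasSum (fun n : ℕ => x ^ n / (n.factorial : ℝ)) (exp x) := by
    rw [exp_eq_exp_ℝ]
    exact NormedSpace.expSeries_div_hasSum_exp x
  have htail : HasSum (fun n : ℕ => x ^ (n + 2) / ((n + 2).factorial : ℝ)) (exp x - x - 1) := by
    convert! (hasSum_nat_add_iff' 2).2 hexp using 1
    simp only [Finset.sum_range_succ, Finset.sum_range_zero, Nat.factorial]
    simp [sub_sub, add_comm]
  have hgeom : HasSum (fun n : ℕ => x ^ 2 / 2 * (x / 3) ^ n) (x ^ 2 / 2 * (1 - x / 3)⁻¹) :=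
    (hasSum_geometric_of_lt_one (by positivity) (by linarith)).mul_left _
  refine hasSum_le (fun n => ?_) htail hgeom
  have hfact : (2 * 3 ^ n : ℝ) ≤ ((n + 2).factorial : ℝ) := by
    have := @Nat.factorial_mul_pow_le_factorial 2 n
    rw [add_comm 2 n] at this
    exact_mod_cast this
  calc x ^ (n + 2) / ((n + 2).factorial : ℝ) ≤ x ^ (n + 2) / (2 * 3 ^ n) := by gcongr
    _ = x ^ 2 / 2 * (x / 3) ^ n := by rw [div_pow, pow_add]; field_simp

/-- Chernoff's bound at `r = t / (v + t / 3)`, for a cumulant generating function dominated by that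
of a Poisson variable of mean `v`. -/
theorem measureReal_add_le_le_exp_of_cgf_le {Ω : Type*} [MeasurableSpace Ω] {P : Measure Ω}
    [IsFiniteMeasure P] {W : Ω → ℝ} {v : ℝ} (hv : 0 ≤ v)
    (hint : ∀ r > 0, Integrable (fun ω => exp (r * W ω)) P)
    (hcgf : ∀ r > 0, cgf W P r ≤ (exp r - 1) * v) {t : ℝ} (ht : 0 < t) :
    P.real {ω | v + t ≤ W ω} ≤ exp (-t ^ 2 / (2 * (v + t / 3))) := by
  have hden : 0 < v + t / 3 := by positivity
  set r := t / (v + t / 3) with hr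
  have hr0 : 0 < r := div_pos ht hden
  -- for `v = 0` one has `r = 3`, outside the range of `exp_sub_sub_one_le_sq_div`
  have hpoisson : (exp r - r - 1) * v ≤ r ^ 2 / 2 * (v + t / 3) := by
    rcases hv.eq_or_lt with rfl | hv
    · rw [mul_zero]
      positivity
    · have hr3 : r < 3 := by
        rw [hr, div_lt_iff₀ hden]
        linarith
      have hcancel : (1 - r / 3)⁻¹ * v = v + t / 3 := by
        have : 1 - r / 3 = v / (v + t / 3) := by rw [hr]; field_simp; ring
        rw [this, inv_div, div_mul_cancel₀ _ hv.ne']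
      rw [← hcancel, ← mul_assoc]
      exact mul_le_mul_of_nonneg_right (exp_sub_sub_one_le_sq_div hr0.le hr3) hv.le
  have hopt : r ^ 2 / 2 * (v + t / 3) - r * t = -t ^ 2 / (2 * (v + t / 3)) := by
    rw [hr]; field_simp; ring
  calc P.real {ω | v + t ≤ W ω}
      ≤ exp (-r * (v + t) + cgf W P r) := measure_ge_le_exp_cgf _ hr0.le (hint r hr0)
    _ ≤ exp (-t ^ 2 / (2 * (v + t / 3))) := by
        rw [← hopt, exp_le_exp]
        linarith [hcgf r hr0]

/-! ### Self-bounding functions -/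

/-- Convexity of `s ↦ exp (-s) + s - 1`, which vanishes at `0`, on the segment from `0` to `r`. -/
theorem exp_neg_mul_add_sub_one_le {x : ℝ} (hx : x ∈ Icc 0 1) (r : ℝ) :
    exp (-(r * x)) + r * x - 1 ≤ x * (exp (-r) + r - 1) := by
  have h := convexOn_exp.2 (mem_univ (-r)) (mem_univ 0) hx.1 (sub_nonneg.2 hx.2) (by ring)
  simp only [smul_eq_mul, mul_zero, add_zero, exp_zero, mul_one] at h
  rw [show x * -r = -(r * x) by ring] at h
  linarith

theorem functionalEntropy_exp_mul {Ω : Type*} [MeasurableSpace Ω] {P : Measure Ω} [NeZero P]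
    {W : Ω → ℝ} {r : ℝ} (hr : r ∈ interior (integrableExpSet W P)) :
    functionalEntropy P (fun ω => exp (r * W ω)) =
      mgf W P r * (r * deriv (cgf W P) r - cgf W P r) := by
  have hint : r ∈ integrableExpSet W P := interior_subset hr
  have hmgf : 0 < mgf W P r := mgf_pos' (NeZero.ne P) hint
  have hlog : ∫ ω, exp (r * W ω) * log (exp (r * W ω)) ∂P = r * ∫ ω, W ω * exp (r * W ω) ∂P := by
    rw [← integral_const_mul]
    exact integral_congr_ae (.of_forall fun ω => by simp only [log_exp]; ring)
  rw [functionalEntropy, hlog, deriv_cgf hr, ← mgf, ← cgf]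
  field_simp

section SelfBounding

variable {ι : Type*} [Fintype ι] [DecidableEq ι] {X : ι → Type*}

/-- A function `W` of several variables is self-bounding, as witnessed by the family `T`, if `T i`
does not depend on the `i`-th variable, the `W - T i` take values in `[0, 1]`, and their sum is at
most `W`. -/
structure IsSelfBounding (W : (∀ i, X i) → ℝ) (T : ι → (∀ i, X i) → ℝ) : Prop where
  update_eq : ∀ i x y, T i (Function.update x i y) = T i x
  le : ∀ i x, T i x ≤ W x
  le_add_one : ∀ i x, W x ≤ T i x + 1
  sum_sub_le : ∀ x, ∑ i, (W x - T i x) ≤ W x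

namespace IsSelfBounding

variable {W : (∀ i, X i) → ℝ} {T : ι → (∀ i, X i) → ℝ} (h : IsSelfBounding W T)

include h

theorem nonneg (x : ∀ i, X i) : 0 ≤ W x :=
  (Finset.sum_nonneg fun i _ => sub_nonneg.2 (h.le i x)).trans (h.sum_sub_le x)

theorem piecewise_le_add_card (x y : ∀ i, X i) (s : Finset ι) :
    W (s.piecewise x y) ≤ W y + s.card := by
  induction s using Finset.induction_on with
  | empty => simp
  | insert i s hi ih =>
    have hstep := h.le_add_one i (Function.update (s.piecewise x y) i (x i))
    rw [h.update_eq] at hstep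
    rw [Finset.piecewise_insert, Finset.card_insert_of_notMem hi]
    push_cast
    linarith [h.le i (s.piecewise x y)]

theorem exists_forall_mem_Icc : ∃ C, ∀ x, W x ∈ Icc 0 C := by
  rcases isEmpty_or_nonempty (∀ i, X i) with hX | ⟨⟨y⟩⟩
  · exact ⟨0, isEmptyElim⟩
  · exact ⟨W y + (Finset.univ : Finset ι).card, fun x =>
      ⟨h.nonneg x, by simpa using h.piecewise_le_add_card x y Finset.univ⟩⟩

theorem sum_exp_mul_le (r : ℝ) (x : ∀ i, X i) :
    ∑ i, exp (r * W x) * (exp (r * T i x - r * W x) - (r * T i x - r * W x) - 1) ≤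
      (exp (-r) + r - 1) * (W x * exp (r * W x)) := by
  have hnonneg : 0 ≤ exp (-r) + r - 1 := by linarith [add_one_le_exp (-r)]
  have hterm (i : ι) : exp (r * T i x - r * W x) - (r * T i x - r * W x) - 1 ≤
      (W x - T i x) * (exp (-r) + r - 1) := by
    have hmem : W x - T i x ∈ Icc 0 1 :=
      ⟨sub_nonneg.2 (h.le i x), sub_le_iff_le_add'.2 (h.le_add_one i x)⟩
    convert! exp_neg_mul_add_sub_one_le hmem r using 1
    ring_nf
  calc ∑ i, exp (r * W x) * (exp (r * T i x - r * W x) - (r * T i x - r * W x) - 1)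
      ≤ ∑ i, exp (r * W x) * ((W x - T i x) * (exp (-r) + r - 1)) := by
        gcongr with i
        exact hterm i
    _ = exp (r * W x) * ((∑ i, (W x - T i x)) * (exp (-r) + r - 1)) := by
        rw [← Finset.mul_sum, ← Finset.sum_mul]
    _ ≤ exp (r * W x) * (W x * (exp (-r) + r - 1)) := by
        gcongr
        exact h.sum_sub_le x
    _ = (exp (-r) + r - 1) * (W x * exp (r * W x)) := by ring

variable [∀ i, MeasurableSpace (X i)] (hW : Measurable W)

include hW

theorem integrable (P : Measure (∀ i, X i)) [IsFiniteMeasure P] : Integrable W P := by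
  obtain ⟨C, hC⟩ := h.exists_forall_mem_Icc
  exact .of_mem_Icc 0 C hW.aemeasurable (.of_forall hC)

theorem integrable_exp_mul (P : Measure (∀ i, X i)) [IsFiniteMeasure P] (r : ℝ) :
    Integrable (fun x => exp (r * W x)) P := by
  obtain ⟨C, hC⟩ := h.exists_forall_mem_Icc
  exact integrable_exp_mul_of_mem_Icc hW.aemeasurable (.of_forall hC)

theorem mem_interior_integrableExpSet (P : Measure (∀ i, X i)) [IsFiniteMeasure P] (r : ℝ) :
    r ∈ interior (integrableExpSet W P) := by
  rw [eq_univ_of_forall (s := integrableExpSet W P) (h.integrable_exp_mul hW P), interior_univ]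
  exact mem_univ r

variable (hT : ∀ i, Measurable (T i)) (μ : ∀ i, Measure (X i)) [∀ i, IsProbabilityMeasure (μ i)]

include hT

theorem functionalEntropy_exp_mul_le (r : ℝ) :
    functionalEntropy (Measure.pi μ) (fun x => exp (r * W x)) ≤
      (exp (-r) + r - 1) * ∫ x, W x * exp (r * W x) ∂Measure.pi μ := by
  set P := Measure.pi μ
  obtain ⟨C, hC⟩ := h.exists_forall_mem_Icc
  have hmem (x) : r * W x ∈ Icc (-(|r| * C)) (|r| * C) := by
    rw [mem_Icc, ← abs_le, abs_mul, abs_of_nonneg (h.nonneg x)]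
    exact mul_le_mul_of_nonneg_left (hC x).2 (abs_nonneg r)
  have hexpmem (x) : exp (r * W x) ∈ Icc (exp (-(|r| * C))) (exp (|r| * C)) :=
    ⟨exp_le_exp.2 (hmem x).1, exp_le_exp.2 (hmem x).2⟩
  have hTmem (i x) : r * T i x - r * W x ∈ Icc (-|r|) |r| := by
    rw [mem_Icc, ← abs_le, ← mul_sub, abs_mul]
    refine mul_le_of_le_one_right (abs_nonneg r) (abs_le.2 ⟨?_, ?_⟩) <;>
      linarith [h.le i x, h.le_add_one i x]
  have hterm (i) : Integrable
      (fun x => exp (r * W x) * (exp (r * T i x - r * W x) - (r * T i x - r * W x) - 1)) P :=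
    (integrable_comp_of_mem_Icc (by fun_prop : Continuous fun u => exp u - u - 1)
      (((hT i).const_mul r).sub (hW.const_mul r)) (hTmem i)).bdd_mul
      (hW.const_mul r).exp.aestronglyMeasurable
      (.of_forall fun x => abs_le_max_abs_abs (hexpmem x).1 (hexpmem x).2)
  have hWexp : Integrable (fun x => W x * exp (r * W x)) P :=
    integrable_mul_of_mem_Icc hW (hW.const_mul r).exp hC hexpmem
  calc functionalEntropy P (fun x => exp (r * W x))
      ≤ ∑ i, ∫ x, exp (r * W x) * (exp (r * T i x - r * W x) - (r * T i x - r * W x) - 1) ∂P :=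
        functionalEntropy_exp_pi_le μ (hW.const_mul r) hmem
          (T := fun i x => r * T i x) (fun i x y => by rw [h.update_eq]) hterm
    _ ≤ ∫ x, (exp (-r) + r - 1) * (W x * exp (r * W x)) ∂P := by
        rw [← integral_finsetSum _ fun i _ => hterm i]
        exact integral_mono (integrable_finsetSum _ fun i _ => hterm i) (hWexp.const_mul _)
          (h.sum_exp_mul_le r)
    _ = (exp (-r) + r - 1) * ∫ x, W x * exp (r * W x) ∂P := integral_const_mul _ _

theorem one_sub_exp_neg_mul_deriv_cgf_le (r : ℝ) :
    (1 - exp (-r)) * deriv (cgf W (Measure.pi μ)) r ≤ cgf W (Measure.pi μ) r := by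
  have hr := h.mem_interior_integrableExpSet hW (Measure.pi μ) r
  have hmgf : 0 < mgf W (Measure.pi μ) r := mgf_pos (h.integrable_exp_mul hW _ r)
  have hderiv : ∫ x, W x * exp (r * W x) ∂Measure.pi μ =
      mgf W (Measure.pi μ) r * deriv (cgf W (Measure.pi μ)) r := by
    rw [deriv_cgf hr, mul_div_cancel₀ _ hmgf.ne']
  have hent := h.functionalEntropy_exp_mul_le hW hT μ r
  rw [functionalEntropy_exp_mul hr, hderiv, mul_left_comm, mul_le_mul_iff_right₀ hmgf] at hent
  linarith

theorem cgf_le {r : ℝ} (hr : 0 < r) :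
    cgf W (Measure.pi μ) r ≤ (exp r - 1) * ∫ x, W x ∂Measure.pi μ := by
  have hdiff (t : ℝ) : DifferentiableAt ℝ (cgf W (Measure.pi μ)) t :=
    (analyticAt_cgf (h.mem_interior_integrableExpSet hW _ t)).differentiableAt
  have hderiv : deriv (cgf W (Measure.pi μ)) 0 = ∫ x, W x ∂Measure.pi μ := by
    rw [deriv_cgf_zero (h.mem_interior_integrableExpSet hW _ 0), probReal_univ, div_one]
  rw [← hderiv]
  exact le_exp_sub_one_mul_of_deriv_le cgf_zero (hdiff 0).hasDerivAt.hasDerivWithinAt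
    (fun t _ => (hdiff t).differentiableWithinAt)
    (fun t _ => h.one_sub_exp_neg_mul_deriv_cgf_le hW hT μ t) hr

theorem measureReal_add_le_le {t : ℝ} (ht : 0 < t) :
    (Measure.pi μ).real {x | (∫ x, W x ∂Measure.pi μ) + t ≤ W x} ≤
      exp (-t ^ 2 / (2 * ((∫ x, W x ∂Measure.pi μ) + t / 3))) :=
  measureReal_add_le_le_exp_of_cgf_le (integral_nonneg h.nonneg)
    (fun r _ => h.integrable_exp_mul hW _ r) (fun _ hr => h.cgf_le hW hT μ hr) ht

end IsSelfBounding

end SelfBounding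

section SupSum

variable {ι κ : Type*} {X : ι → Type*} (φ : κ → ∀ i, X i → ℝ) (d : κ → ℝ)

/-- The supremum over `l` of the partial sums `∑ i ∈ s, φ l i (x i)`, each shifted by a
constant `d l`. The choice `s = univ.erase i` removes the dependence on the `i`-th variable. -/
def supSum (s : Finset ι) (x : ∀ i, X i) : ℝ :=
  ⨆ l, (∑ i ∈ s, φ l i (x i) + d l)

variable {φ d}

theorem measurable_supSum [Countable κ] [∀ i, MeasurableSpace (X i)]
    (hφ : ∀ l i, Measurable (φ l i)) (s : Finset ι) : Measurable (supSum φ d s) :=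
  .iSup fun l => (Finset.measurable_sum s fun i _ =>
    (hφ l i).comp (measurable_pi_apply i)).add_const _

theorem bddAbove_range_sum_add (hφ : ∀ l i y, φ l i y ≤ 1) (hd : BddAbove (range d))
    (s : Finset ι) (x : ∀ i, X i) : BddAbove (range fun l => ∑ i ∈ s, φ l i (x i) + d l) := by
  obtain ⟨D, hD⟩ := hd
  refine ⟨s.card + D, ?_⟩
  rintro _ ⟨l, rfl⟩
  exact add_le_add (by simpa using Finset.sum_le_card_nsmul s _ 1 fun i _ => hφ l i (x i))
    (hD ⟨l, rfl⟩)

theorem isSelfBounding_supSum [Fintype ι] [DecidableEq ι] (hφ : ∀ l i y, φ l i y ∈ Icc 0 1)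
    (hd0 : ∀ l, 0 ≤ d l) (hd : BddAbove (range d)) :
    IsSelfBounding (supSum φ d Finset.univ) fun i => supSum φ d (Finset.univ.erase i) := by
  have hle (s x l) : ∑ i ∈ s, φ l i (x i) + d l ≤ supSum φ d s x :=
    le_ciSup (bddAbove_range_sum_add (fun l i y => (hφ l i y).2) hd s x) l
  have hnonneg (s x) : 0 ≤ supSum φ d s x :=
    Real.iSup_nonneg fun l => add_nonneg (Finset.sum_nonneg fun i _ => (hφ l i _).1) (hd0 l)
  have hsplit (i) (x : ∀ i, X i) (l) :
      φ l i (x i) + ∑ j ∈ Finset.univ.erase i, φ l j (x j) = ∑ j, φ l j (x j) :=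
    Finset.add_sum_erase _ (fun j => φ l j (x j)) (Finset.mem_univ i)
  refine ⟨fun i x y => ?_, fun i x => ?_, fun i x => ?_, fun x => ?_⟩
  · refine iSup_congr fun l => congrArg (· + d l) (Finset.sum_congr rfl fun j hj => ?_)
    rw [Function.update_of_ne (Finset.ne_of_mem_erase hj)]
  · refine Real.iSup_le (fun l => ?_) (hnonneg _ x)
    linarith [hle Finset.univ x l, hsplit i x l, (hφ l i (x i)).1]
  · refine Real.iSup_le (fun l => ?_) (add_nonneg (hnonneg _ x) zero_le_one)
    linarith [hle (Finset.univ.erase i) x l, hsplit i x l, (hφ l i (x i)).2]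
  · -- summing `∑ j, φ l j - φ l i` over `i` gives `(card - 1) * ∑ j, φ l j`
    rw [Finset.sum_sub_distrib, Finset.sum_const, nsmul_eq_mul, sub_le_iff_le_add, supSum,
      Real.mul_iSup_of_nonneg (Nat.cast_nonneg _)]
    refine Real.iSup_le (fun l => ?_)
      (add_nonneg (hnonneg _ x) (Finset.sum_nonneg fun i _ => hnonneg _ x))
    have hsum : ∑ i, (∑ j, φ l j (x j) + d l - φ l i (x i)) ≤
        ∑ i, supSum φ d (Finset.univ.erase i) x :=
      Finset.sum_le_sum fun i _ => by linarith [hle (Finset.univ.erase i) x l, hsplit i x l]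
    rw [Finset.sum_sub_distrib, Finset.sum_const, nsmul_eq_mul] at hsum
    have hW := hle Finset.univ x l
    rw [supSum] at hW
    linarith [hd0 l]

end SupSum

/-! ### Inverting a Bernstein bound -/

theorem sq_div_eq_of_eq_sqrt_add {c v L t : ℝ} (hc : 0 < c) (hv : 0 ≤ v) (hL : 0 < L)
    (ht : t = √((c * L / 3) ^ 2 + 2 * c * L * v) + c * L / 3) :
    t ^ 2 / (2 * c * (v + t / 3)) = L := by
  have hsq := sq_sqrt (show 0 ≤ (c * L / 3) ^ 2 + 2 * c * L * v by positivity)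
  have hpos : 0 < t := by rw [ht]; positivity
  rw [div_eq_iff (by positivity), ht]
  linear_combination hsq

theorem one_sub_le_measureReal_le_of_bernstein {Ω : Type*} [MeasurableSpace Ω] {P : Measure Ω}
    [IsProbabilityMeasure P] {Z : Ω → ℝ} {z c v : ℝ} (hc : 0 < c) (hv : 0 ≤ v)
    (htail : ∀ t > 0, P.real {ω | z + t ≤ Z ω} ≤ exp (-t ^ 2 / (2 * c * (v + t / 3))))
    {δ : ℝ} (hδ : δ ∈ Ioo 0 1) :
    1 - δ ≤ P.real {ω | Z ω ≤ z + √((c * log (1 / δ) / 3) ^ 2 + 2 * c * log (1 / δ) * v) +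
      c * log (1 / δ) / 3} := by
  have hL : 0 < log (1 / δ) := log_pos ((one_lt_div hδ.1).2 hδ.2)
  rw [add_assoc]
  set t := √((c * log (1 / δ) / 3) ^ 2 + 2 * c * log (1 / δ) * v) + c * log (1 / δ) / 3 with ht
  have htδ : P.real {ω | z + t ≤ Z ω} ≤ δ := by
    refine (htail t (by positivity)).trans_eq ?_
    rw [neg_div, sq_div_eq_of_eq_sqrt_add hc hv hL ht, one_div, log_inv, neg_neg, exp_log hδ.1]
  have hcover : univ ⊆ {ω | Z ω ≤ z + t} ∪ {ω | z + t ≤ Z ω} := fun ω _ => le_total (Z ω) (z + t)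
  have hprob : 1 ≤ P.real {ω | Z ω ≤ z + t} + P.real {ω | z + t ≤ Z ω} :=
    probReal_univ.symm.le.trans ((measureReal_mono hcover).trans (measureReal_union_le _ _))
  linarith

/-! ### The positive supremum deviation -/

section SupremumDeviation

variable {X ι : Type*} [MeasurableSpace X] {f : ι → X → ℝ} {a b : ℝ}
  (hmeas : ∀ l, Measurable (f l)) (μ : Measure X) {m : ℕ}

include hmeas

theorem measurable_sdPlus [Countable ι] : Measurable (sdPlus f μ (m := m)) :=
  .iSup fun l => ((Finset.measurable_sum _ fun k _ =>
    (hmeas l).comp (measurable_pi_apply k)).const_mul _).sub_const _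

variable [IsProbabilityMeasure μ] (hrange : ∀ l x, f l x ∈ Icc a b) (hm : 0 < m)

include hrange

theorem integral_le_iSup_integral (l : ι) : ∫ x, f l x ∂μ ≤ ⨆ l, ∫ x, f l x ∂μ :=
  le_ciSup (f := fun l => ∫ x, f l x ∂μ)
    ⟨b, forall_mem_range.2 fun l => (integral_mem_Icc_s15 (hmeas l) (hrange l)).2⟩ l

include hm

theorem bddAbove_range_average_sub_integral (S : Fin m → X) :
    BddAbove (range fun l => (m : ℝ)⁻¹ * ∑ k, f l (S k) - ∫ x, f l x ∂μ) := by
  refine ⟨b - a, forall_mem_range.2 fun l => sub_le_sub ?_ ?_⟩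
  · rw [inv_mul_le_iff₀ (Nat.cast_pos.2 hm)]
    simpa using Finset.sum_le_sum fun k (_ : k ∈ Finset.univ) => (hrange l (S k)).2
  · exact (integral_mem_Icc_s15 (hmeas l) (hrange l)).1

variable [Nonempty ι] (hab : a < b)

include hab

theorem supSum_eq_mul_sdPlus_add_etaF :
    supSum (fun l (_ : Fin m) x => (f l x - a) / (b - a))
        (fun l => m / (b - a) * ((⨆ l, ∫ x, f l x ∂μ) - ∫ x, f l x ∂μ)) Finset.univ =
      fun S => m / (b - a) * (sdPlus f μ S + etaF f μ a) := by
  funext S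
  rw [sdPlus, ciSup_add (bddAbove_range_average_sub_integral hmeas μ hrange hm S),
    Real.mul_iSup_of_nonneg (div_nonneg m.cast_nonneg (sub_nonneg.2 hab.le)), supSum]
  refine iSup_congr fun l => ?_
  rw [← Finset.sum_div, Finset.sum_sub_distrib, Finset.sum_const, Finset.card_univ,
    Fintype.card_fin, nsmul_eq_mul, etaF]
  have : b - a ≠ 0 := (sub_pos.2 hab).ne'
  field_simp
  ring

variable [Countable ι]

theorem exists_isSelfBounding_mul_sdPlus_add_etaF :
    ∃ T : Fin m → (Fin m → X) → ℝ, (∀ i, Measurable (T i)) ∧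
      IsSelfBounding (fun S => m / (b - a) * (sdPlus f μ S + etaF f μ a)) T := by
  have hc : 0 < b - a := sub_pos.2 hab
  rw [← supSum_eq_mul_sdPlus_add_etaF hmeas μ hrange hm hab]
  refine ⟨_, fun i => measurable_supSum (fun l _ => ((hmeas l).sub_const a).div_const _) _,
    isSelfBounding_supSum (fun l _ x => ?_) (fun l => ?_) ?_⟩
  · exact ⟨div_nonneg (sub_nonneg.2 (hrange l x).1) hc.le,
      (div_le_one hc).2 (sub_le_sub_right (hrange l x).2 a)⟩
  · exact mul_nonneg (by positivity) (sub_nonneg.2 (integral_le_iSup_integral hmeas μ hrange l))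
  · refine ⟨m / (b - a) * ((⨆ l, ∫ x, f l x ∂μ) - a), forall_mem_range.2 fun l => ?_⟩
    have := (integral_mem_Icc_s15 (P := μ) (hmeas l) (hrange l)).1
    gcongr

theorem integrable_sdPlus :
    Integrable (sdPlus f μ (m := m)) (Measure.pi fun _ => μ) := by
  have hk : (m / (b - a) : ℝ) ≠ 0 := by
    have := sub_pos.2 hab
    positivity
  obtain ⟨T, -, hT⟩ := exists_isSelfBounding_mul_sdPlus_add_etaF hmeas μ hrange hm hab
  have hint := hT.integrable (((measurable_sdPlus hmeas μ).add_const _).const_mul _)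
    (Measure.pi fun _ => μ)
  rwa [integrable_const_mul_iff hk.isUnit, integrable_add_const_iff] at hint

theorem integral_mul_sdPlus_add_etaF :
    ∫ S : Fin m → X, m / (b - a) * (sdPlus f μ S + etaF f μ a) ∂Measure.pi (fun _ => μ) =
      m / (b - a) *
        ((∫ S : Fin m → X, sdPlus f μ S ∂Measure.pi fun _ => μ) + etaF f μ a) := by
  rw [integral_const_mul, integral_add (integrable_sdPlus hmeas μ hrange hm hab)
    (integrable_const _), integral_const, probReal_univ, one_smul]

theorem integral_sdPlus_add_etaF_nonneg :
    0 ≤ (∫ S : Fin m → X, sdPlus f μ S ∂Measure.pi fun _ => μ) + etaF f μ a := by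
  have hk : 0 < (m / (b - a) : ℝ) := div_pos (Nat.cast_pos.2 hm) (sub_pos.2 hab)
  obtain ⟨T, -, hT⟩ := exists_isSelfBounding_mul_sdPlus_add_etaF hmeas μ hrange hm hab
  rw [← mul_nonneg_iff_of_pos_left hk, ← integral_mul_sdPlus_add_etaF hmeas μ hrange hm hab]
  exact integral_nonneg hT.nonneg

theorem measureReal_integral_add_le_sdPlus_le {t : ℝ} (ht : 0 < t) :
    (Measure.pi fun _ => μ).real
        {S : Fin m → X | (∫ S : Fin m → X, sdPlus f μ S ∂Measure.pi fun _ => μ) + t ≤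
          sdPlus f μ S} ≤
      exp (-t ^ 2 / (2 * ((b - a) / m) *
        ((∫ S : Fin m → X, sdPlus f μ S ∂Measure.pi fun _ => μ) + etaF f μ a + t / 3))) := by
  have hc : 0 < b - a := sub_pos.2 hab
  have hm' : (0 : ℝ) < m := Nat.cast_pos.2 hm
  have hk : 0 < (m / (b - a) : ℝ) := div_pos hm' hc
  obtain ⟨T, hTmeas, hT⟩ := exists_isSelfBounding_mul_sdPlus_add_etaF hmeas μ hrange hm hab
  have htail := hT.measureReal_add_le_le
    (((measurable_sdPlus hmeas μ).add_const _).const_mul _) hTmeas (fun _ => μ) (mul_pos hk ht)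
  rw [integral_mul_sdPlus_add_etaF hmeas μ hrange hm hab] at htail
  simp only [← mul_add, mul_le_mul_iff_right₀ hk, add_right_comm _ _ t, add_le_add_iff_right]
    at htail
  convert! htail using 2
  field_simp

end SupremumDeviation

theorem stmt_15_general {X : Type*} [MeasurableSpace X] {ι : Type*} [Countable ι] [Nonempty ι]
    (f : ι → X → ℝ) (a b : ℝ) (hab : a < b) (hmeas : ∀ l, Measurable (f l))
    (hrange : ∀ l x, f l x ∈ Icc a b) (μ : Measure X) [IsProbabilityMeasure μ] (m : ℕ)
    (hm : 0 < m) (EZ : ℝ)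
    (hEZ : EZ = ∫ S : Fin m → X, sdPlus f μ S ∂(Measure.pi fun _ : Fin m => μ)) :
    (∀ ε : ℝ, 0 < ε →
      ((Measure.pi fun _ : Fin m => μ)
          {S : Fin m → X | sdPlus f μ S ≥ EZ + ε}).toReal ≤
        Real.exp (-((m : ℝ) * ε ^ 2) / (2 * (b - a) * (EZ + etaF f μ a + ε / 3)))) ∧
    ∀ δ : ℝ, δ ∈ Set.Ioo (0 : ℝ) 1 →
      1 - δ ≤ ((Measure.pi fun _ : Fin m => μ)
        {S : Fin m → X | sdPlus f μ S ≤ EZ +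
          Real.sqrt (((b - a) * Real.log (1 / δ) / (3 * m)) ^ 2 +
            2 * (b - a) * Real.log (1 / δ) * (EZ + etaF f μ a) / m) +
          (b - a) * Real.log (1 / δ) / (3 * m)}).toReal := by
  have hm' : (0 : ℝ) < m := Nat.cast_pos.2 hm
  have htail (t : ℝ) (ht : 0 < t) := measureReal_integral_add_le_sdPlus_le hmeas μ hrange hm hab ht
  have hnonneg := integral_sdPlus_add_etaF_nonneg hmeas μ hrange hm hab
  rw [← hEZ] at htail hnonneg
  refine ⟨fun ε hε => (htail ε hε).trans_eq ?_, fun δ hδ => ?_⟩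
  · congr 1
    field_simp
  · have hquantile := one_sub_le_measureReal_le_of_bernstein (div_pos (sub_pos.2 hab) hm')
      hnonneg htail hδ
    have hlinear : (b - a) / m * log (1 / δ) / 3 = (b - a) * log (1 / δ) / (3 * m) := by
      field_simp
    have hconst : 2 * ((b - a) / m) * log (1 / δ) * (EZ + etaF f μ a) =
        2 * (b - a) * log (1 / δ) * (EZ + etaF f μ a) / m := by
      field_simp
    rwa [hlinear, hconst] at hquantile

theorem stmt_15 {X : Type*} [MeasurableSpace X] {ι : Type*} [Countable ι]
    (f : ι → X → ℝ) (a b : ℝ) (ha : a ≤ 0) (hb : 0 < b)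
    (hmeas : ∀ l : ι, Measurable (f l))
    (hrange : ∀ (l : ι) (x : X), f l x ∈ Set.Icc a b)
    (hzero : ∃ l₀ : ι, ∀ x : X, f l₀ x = 0)
    (μ : Measure X) [IsProbabilityMeasure μ] (m : ℕ) (hm : 0 < m)
    (EZ : ℝ) (hEZ : EZ = ∫ S : Fin m → X, sdPlus f μ S ∂(Measure.pi fun _ : Fin m => μ)) :
    (∀ ε : ℝ, 0 < ε →
      ((Measure.pi fun _ : Fin m => μ)
          {S : Fin m → X | sdPlus f μ S ≥ EZ + ε}).toReal ≤
        Real.exp (-((m : ℝ) * ε ^ 2) / (2 * (b - a) * (EZ + etaF f μ a + ε / 3)))) ∧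
    ∀ δ : ℝ, δ ∈ Set.Ioo (0 : ℝ) 1 →
      1 - δ ≤ ((Measure.pi fun _ : Fin m => μ)
        {S : Fin m → X | sdPlus f μ S ≤ EZ +
          Real.sqrt (((b - a) * Real.log (1 / δ) / (3 * m)) ^ 2 +
            2 * (b - a) * Real.log (1 / δ) * (EZ + etaF f μ a) / m) +
          (b - a) * Real.log (1 / δ) / (3 * m)}).toReal :=
  have : Nonempty ι := hzero.nonempty
  stmt_15_general f a b (ha.trans_lt hb) hmeas hrange μ m hm EZ hEZ
end
end

section
/- Let S = (s_1,…,s_m) be m i.i.d. samples from μ. For all 0 < ε ≤ η_F, Pr_S( η_F ≥ η̂_F(S) + ε ) ≤ exp( − ( m η_F / c ) · h( − ε / η_F ) ) ≤ exp( − m ε² / ( 2 c η_F ) ), where h(x) = (1+x)ln(1+x) − x. Furthermore, for every δ ∈ (0,1), with probability at least 1 − δ over S, η_F ≤ η̂_F(S) + c ln(1/δ)/m + sqrt( ( c ln(1/δ)/m )² + 2 c η̂_F(S) ln(1/δ)/m ). -/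
open MeasureTheory

noncomputable section

/-!
For every `l`, the empirical mean of `f l` is at most `η̂ + a`, so the event `η̂ + ε ≤ η` lies in
the lower-tail event of each single empirical mean. By independence and the Poisson bound
`E[exp (t Z)] ≤ exp (E[Z] (exp t - 1))` for `Z` with values in `[0, 1]`, that tail has probability
at most `exp (m / (b - a) * ((E[f l] - a) (exp t - 1) - t (η - ε)))` for each `t ≤ 0`. This bound
is continuous and antitone in `E[f l]`, so it survives the supremum over `l`, and optimizing over
`t` gives the bound with `h`. The sub-Gaussian form follows from `x² / 2 ≤ h (-x)` on `[0, 1]`.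

For the confidence bound, put `K = (b - a) ln (1/δ) / m` and `ε = √(2 K η)`, which makes the
sub-Gaussian bound equal to `δ`. Solving the quadratic shows that a sample violating the confidence
bound satisfies `η̂ + ε ≤ η`; as `η̂ ≥ 0`, such a sample exists only if `ε ≤ η`.
-/

section RealBounds

/-- The substitution `1 - x = exp (-s)` turns this inequality into `s ≤ sinh s`. -/
lemma sq_div_two_le_hfun_neg {x : ℝ} (hx0 : 0 ≤ x) (hx1 : x ≤ 1) : x ^ 2 / 2 ≤ hfun (-x) := by
  rcases hx1.eq_or_lt with rfl | hx
  · norm_num [hfun]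
  have hpos : 0 < 1 - x := by linarith
  have hlog : -Real.log (1 - x) ≤ ((1 - x)⁻¹ - (1 - x)) / 2 := by
    have h := Real.self_le_sinh_iff.2
      (neg_nonneg.2 (Real.log_nonpos hpos.le (by linarith : 1 - x ≤ 1)))
    rwa [Real.sinh_eq, neg_neg, Real.exp_neg, Real.exp_log hpos] at h
  calc x ^ 2 / 2 = x - (1 - x) * (((1 - x)⁻¹ - (1 - x)) / 2) := by field_simp; ring
    _ ≤ x - (1 - x) * -Real.log (1 - x) := by gcongr
    _ = hfun (-x) := by rw [hfun, ← sub_eq_add_neg]; ring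

lemma exp_hfun_le_exp_neg_sq {N c η ε : ℝ} (hN : 0 ≤ N) (hc : 0 < c) (hε : 0 < ε) (hεη : ε ≤ η) :
    Real.exp (-(N * η / c) * hfun (-ε / η)) ≤ Real.exp (-(N * ε ^ 2) / (2 * c * η)) := by
  have hη : 0 < η := hε.trans_le hεη
  have hquad : (ε / η) ^ 2 / 2 ≤ hfun (-ε / η) := by
    rw [neg_div]
    exact sq_div_two_le_hfun_neg (by positivity) ((div_le_one hη).2 hεη)
  rw [Real.exp_le_exp]
  calc -(N * η / c) * hfun (-ε / η) ≤ -(N * η / c) * ((ε / η) ^ 2 / 2) :=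
        mul_le_mul_of_nonpos_left hquad (neg_nonpos.2 (by positivity))
    _ = -(N * ε ^ 2) / (2 * c * η) := by field_simp

lemma le_exp_neg_mul_hfun_of_forall_le_exp {p N η ε : ℝ} (hε : 0 < ε) (hεη : ε ≤ η)
    (h : ∀ t ≤ 0, p ≤ Real.exp (N * (η * (Real.exp t - 1) - t * (η - ε)))) :
    p ≤ Real.exp (-(N * η) * hfun (-ε / η)) := by
  have hη : 0 < η := hε.trans_le hεη
  rcases hεη.eq_or_lt with rfl | hlt
  · -- The optimal `t` is `-∞`.
    have hvalue : -(N * ε) * hfun (-ε / ε) = N * (ε * (0 - 1)) := by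
      rw [neg_div, div_self hε.ne', hfun]; norm_num
    have hlim : Filter.Tendsto (fun t ↦ Real.exp (N * (ε * (Real.exp t - 1)))) Filter.atBot
        (nhds (Real.exp (N * (ε * (0 - 1))))) :=
      (((Real.tendsto_exp_atBot.sub_const 1).const_mul ε).const_mul N).rexp
    rw [hvalue]
    refine ge_of_tendsto hlim ?_
    filter_upwards [Filter.eventually_le_atBot 0] with t ht
    simpa only [sub_self, mul_zero, sub_zero] using h t ht
  · have hpos : 0 < 1 + -ε / η := by
      have : ε / η < 1 := (div_lt_one hη).2 hlt
      rw [neg_div]; linarith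
    have hle_one : 1 + -ε / η ≤ 1 := by
      have : 0 < ε / η := by positivity
      rw [neg_div]; linarith
    refine (h _ (Real.log_nonpos hpos.le hle_one)).trans_eq ?_
    rw [Real.exp_log hpos, hfun]
    congr 1
    field_simp
    ring

lemma add_sqrt_le_of_add_sqrt_quadratic_lt {η e K : ℝ} (hK : 0 ≤ K)
    (h : e + K + √(K ^ 2 + 2 * K * e) < η) : e + √(2 * K * η) ≤ η := by
  have hsqrt : √(K ^ 2 + 2 * K * e) < η - e - K := by linarith
  have hsq : K ^ 2 + 2 * K * e < (η - e - K) ^ 2 := Real.lt_sq_of_sqrt_lt hsqrt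
  have hdiff : 0 ≤ η - e := by linarith [Real.sqrt_nonneg (K ^ 2 + 2 * K * e)]
  have : √(2 * K * η) ≤ η - e := Real.sqrt_le_iff.2 ⟨hdiff, by linarith⟩
  linarith

end RealBounds

section Chernoff

open ProbabilityTheory

variable {Ω : Type*} [MeasurableSpace Ω] {μ : Measure Ω}

lemma one_sub_le_measureReal_of_compl_le [IsProbabilityMeasure μ] {s : Set Ω} {p : ℝ}
    (h : μ.real sᶜ ≤ p) : 1 - p ≤ μ.real s := by
  have hunion := measureReal_union_le (μ := μ) s sᶜ
  rw [Set.union_compl_self, probReal_univ] at hunion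
  linarith

lemma mgf_le_exp_integral_mul_exp_sub_one [IsProbabilityMeasure μ] {Z : Ω → ℝ}
    (hZ : AEMeasurable Z μ) (hZ01 : ∀ᵐ ω ∂μ, Z ω ∈ Set.Icc 0 1) (t : ℝ) :
    mgf Z μ t ≤ Real.exp (μ[Z] * (Real.exp t - 1)) := by
  have hint : Integrable Z μ := Integrable.of_mem_Icc 0 1 hZ hZ01
  have hchord : ∀ᵐ ω ∂μ, Real.exp (t * Z ω) ≤ 1 + Z ω * (Real.exp t - 1) := by
    filter_upwards [hZ01] with ω hω
    have h := rpow_one_add_le_one_add_mul_self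
      (by linarith [Real.exp_pos t] : -1 ≤ Real.exp t - 1) hω.1 hω.2
    rwa [add_sub_cancel, ← Real.exp_mul] at h
  calc mgf Z μ t ≤ ∫ ω, (1 + Z ω * (Real.exp t - 1)) ∂μ :=
        integral_mono_ae (integrable_exp_mul_of_mem_Icc hZ hZ01)
          ((integrable_const 1).add (hint.mul_const _)) hchord
    _ = μ[Z] * (Real.exp t - 1) + 1 := by
        rw [integral_add (integrable_const 1) (hint.mul_const _), integral_mul_const,
          integral_const, probReal_univ, one_smul, add_comm]
    _ ≤ Real.exp (μ[Z] * (Real.exp t - 1)) := Real.add_one_le_exp _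

lemma measureReal_sum_le_le_exp {κ : Type*} {Z : κ → Ω → ℝ} (hindep : iIndepFun Z μ)
    (hZ : ∀ i, AEMeasurable (Z i) μ) (hZ01 : ∀ i, ∀ᵐ ω ∂μ, Z i ω ∈ Set.Icc 0 1)
    (s : Finset κ) {t : ℝ} (ht : t ≤ 0) (r : ℝ) :
    μ.real {ω | ∑ i ∈ s, Z i ω ≤ r} ≤
      Real.exp ((∑ i ∈ s, μ[Z i]) * (Real.exp t - 1) - t * r) := by
  have := hindep.isProbabilityMeasure
  have hsum01 : ∀ᵐ ω ∂μ, (∑ i ∈ s, Z i) ω ∈ Set.Icc (0 : ℝ) (s.card : ℝ) := by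
    filter_upwards [(Finset.eventually_all s).2 fun i _ ↦ hZ01 i] with ω hω
    rw [Finset.sum_apply]
    refine ⟨Finset.sum_nonneg fun i hi ↦ (hω i hi).1, ?_⟩
    simpa using Finset.sum_le_card_nsmul s (Z · ω) 1 fun i hi ↦ (hω i hi).2
  have hint : Integrable (fun ω ↦ Real.exp (t * (∑ i ∈ s, Z i) ω)) μ :=
    integrable_exp_mul_of_mem_Icc (s.aemeasurable_sum fun i _ ↦ hZ i) hsum01
  calc μ.real {ω | ∑ i ∈ s, Z i ω ≤ r} = μ.real {ω | (∑ i ∈ s, Z i) ω ≤ r} := by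
        simp only [Finset.sum_apply]
    _ ≤ Real.exp (-t * r) * mgf (∑ i ∈ s, Z i) μ t := measure_le_le_exp_mul_mgf r ht hint
    _ = Real.exp (-t * r) * ∏ i ∈ s, mgf (Z i) μ t := by rw [hindep.mgf_sum₀ hZ s]
    _ ≤ Real.exp (-t * r) * ∏ i ∈ s, Real.exp (μ[Z i] * (Real.exp t - 1)) := by
        gcongr with i
        · exact fun i _ ↦ mgf_nonneg
        · exact mgf_le_exp_integral_mul_exp_sub_one (hZ i) (hZ01 i) t
    _ = Real.exp ((∑ i ∈ s, μ[Z i]) * (Real.exp t - 1) - t * r) := by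
        rw [← Real.exp_sum, ← Real.exp_add, ← Finset.sum_mul]
        congr 1
        ring

lemma measureReal_pi_sum_le_le_exp [IsProbabilityMeasure μ] {κ : Type*} [Fintype κ] {Z : Ω → ℝ}
    (hZ : AEMeasurable Z μ) (hZ01 : ∀ᵐ ω ∂μ, Z ω ∈ Set.Icc 0 1) {t : ℝ} (ht : t ≤ 0) (r : ℝ) :
    (Measure.pi fun _ : κ ↦ μ).real {S | ∑ k, Z (S k) ≤ r} ≤
      Real.exp (Fintype.card κ * μ[Z] * (Real.exp t - 1) - t * r) := by
  have heval (k : κ) := Measure.quasiMeasurePreserving_eval (fun _ : κ ↦ μ) k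
  have h := measureReal_sum_le_le_exp
    (iIndepFun_pi (μ := fun _ : κ ↦ μ) (X := fun _ ↦ Z) fun _ ↦ hZ)
    (fun k ↦ hZ.comp_quasiMeasurePreserving (heval k)) (fun k ↦ (heval k).ae hZ01)
    Finset.univ ht r
  simpa only [integral_comp_eval (μ := fun _ : κ ↦ μ) hZ.aestronglyMeasurable,
    Finset.sum_const, Finset.card_univ, nsmul_eq_mul] using h

end Chernoff

section EmpiricalMean

variable {X ι : Type*} {a b : ℝ} {m : ℕ}

lemma inv_mul_sum_mem_Icc (hm : 0 < m) {x : Fin m → ℝ} (hx : ∀ k, x k ∈ Set.Icc a b) :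
    (m : ℝ)⁻¹ * ∑ k, x k ∈ Set.Icc a b := by
  have : Nonempty (Fin m) := Fin.pos_iff_nonempty.1 hm
  have hmean : (m : ℝ)⁻¹ * ∑ k, x k = Finset.univ.expect x := by
    rw [Finset.expect_eq_sum_div_card, Finset.card_univ, Fintype.card_fin, div_eq_inv_mul]
  rw [hmean]
  exact ⟨Finset.le_expect Finset.univ_nonempty fun k _ ↦ (hx k).1,
    Finset.expect_le Finset.univ_nonempty fun k _ ↦ (hx k).2⟩

lemma inv_mul_sum_le_etahat_add {f : ι → X → ℝ} (hrange : ∀ l x, f l x ∈ Set.Icc a b)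
    (hm : 0 < m) (S : Fin m → X) (l : ι) :
    (m : ℝ)⁻¹ * ∑ k, f l (S k) ≤ etahat f S a + a := by
  have hbdd : BddAbove (Set.range fun l ↦ (m : ℝ)⁻¹ * ∑ k, f l (S k)) :=
    ⟨b, Set.forall_mem_range.2 fun l ↦ (inv_mul_sum_mem_Icc hm fun k ↦ hrange l (S k)).2⟩
  rw [etahat, sub_add_cancel]
  exact le_ciSup hbdd l

lemma etahat_nonneg [Nonempty ι] {f : ι → X → ℝ} (hrange : ∀ l x, f l x ∈ Set.Icc a b)
    (hm : 0 < m) (S : Fin m → X) : 0 ≤ etahat f S a := by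
  obtain ⟨l⟩ := ‹Nonempty ι›
  linarith [inv_mul_sum_le_etahat_add hrange hm S l,
    (inv_mul_sum_mem_Icc hm fun k ↦ hrange l (S k)).1]

lemma measureReal_inv_mul_sum_le_le_exp [MeasurableSpace X] {μ : Measure X}
    [IsProbabilityMeasure μ] {g : X → ℝ} (hab : a < b) (hg : AEMeasurable g μ)
    (hgab : ∀ᵐ x ∂μ, g x ∈ Set.Icc a b) (hm : 0 < m) {t : ℝ} (ht : t ≤ 0) (u : ℝ) :
    (Measure.pi fun _ : Fin m ↦ μ).real {S | (m : ℝ)⁻¹ * ∑ k, g (S k) ≤ u} ≤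
      Real.exp (m / (b - a) * ((∫ x, g x ∂μ - a) * (Real.exp t - 1) - t * (u - a))) := by
  have hc : 0 < b - a := sub_pos.2 hab
  set Z : X → ℝ := fun x ↦ (g x - a) / (b - a) with hZdef
  have hZ : AEMeasurable Z μ := (hg.sub_const a).div_const _
  have hZ01 : ∀ᵐ x ∂μ, Z x ∈ Set.Icc 0 1 := by
    filter_upwards [hgab] with x hx
    exact ⟨div_nonneg (sub_nonneg.2 hx.1) hc.le, (div_le_one hc).2 (by linarith [hx.2])⟩
  have hmean : ∫ x, Z x ∂μ = (∫ x, g x ∂μ - a) / (b - a) := by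
    rw [hZdef, integral_div, integral_sub (Integrable.of_mem_Icc a b hg hgab) (integrable_const a),
      integral_const, probReal_univ, one_smul]
  have hevent : {S : Fin m → X | (m : ℝ)⁻¹ * ∑ k, g (S k) ≤ u} =
      {S | ∑ k, Z (S k) ≤ m / (b - a) * (u - a)} := by
    ext S
    have hsum : ∑ k, Z (S k) = m / (b - a) * ((m : ℝ)⁻¹ * ∑ k, g (S k) - a) := by
      simp only [hZdef, ← Finset.sum_div, Finset.sum_sub_distrib, Finset.sum_const,
        Finset.card_univ, Fintype.card_fin, nsmul_eq_mul]
      field_simp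
    have hscale : 0 < m / (b - a) := by positivity
    rw [Set.mem_ofPred_eq, Set.mem_ofPred_eq, hsum, mul_le_mul_iff_right₀ hscale,
      sub_le_sub_iff_right]
  rw [hevent]
  refine (measureReal_pi_sum_le_le_exp hZ hZ01 ht _).trans_eq ?_
  rw [hmean, Fintype.card_fin]
  congr 1
  ring

end EmpiricalMean

section LowerTail

variable {X ι : Type*} [MeasurableSpace X] [Nonempty ι] {f : ι → X → ℝ} {a b : ℝ}
  {μ : Measure X} [IsProbabilityMeasure μ] {m : ℕ}

lemma measureReal_etahat_add_le_etaF_le_exp_of_nonpos (hab : a < b)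
    (hmeas : ∀ l, AEMeasurable (f l) μ) (hrange : ∀ l x, f l x ∈ Set.Icc a b) (hm : 0 < m)
    (ε : ℝ) {t : ℝ} (ht : t ≤ 0) :
    (Measure.pi fun _ : Fin m ↦ μ).real {S | etahat f S a + ε ≤ etaF f μ a} ≤
      Real.exp (m / (b - a) *
        (etaF f μ a * (Real.exp t - 1) - t * (etaF f μ a - ε))) := by
  have hscale : 0 ≤ m / (b - a) := div_nonneg m.cast_nonneg (sub_nonneg.2 hab.le)
  set bound : ℝ → ℝ := fun p ↦
    Real.exp (m / (b - a) * ((p - a) * (Real.exp t - 1) - t * (etaF f μ a - ε)))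
  have hanti : Antitone bound := fun p q hpq ↦ by
    have hexp : Real.exp t - 1 ≤ 0 := sub_nonpos.2 (Real.exp_le_one_iff.2 ht)
    have hmul : (q - a) * (Real.exp t - 1) ≤ (p - a) * (Real.exp t - 1) :=
      mul_le_mul_of_nonpos_right (sub_le_sub_right hpq a) hexp
    exact Real.exp_le_exp.2 (mul_le_mul_of_nonneg_left (sub_le_sub_right hmul _) hscale)
  have hcont : Continuous bound := by fun_prop
  have hmeans : BddAbove (Set.range fun l ↦ ∫ x, f l x ∂μ) := by
    refine ⟨b, Set.forall_mem_range.2 fun l ↦ ?_⟩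
    have hint := Integrable.of_mem_Icc a b (hmeas l) (.of_forall (hrange l))
    simpa using integral_mono hint (integrable_const b) fun x ↦ (hrange l x).2
  change _ ≤ bound (⨆ l, ∫ x, f l x ∂μ)
  rw [hanti.map_ciSup_of_continuousAt hcont.continuousAt hmeans]
  refine le_ciInf fun l ↦ ?_
  have htail := measureReal_inv_mul_sum_le_le_exp hab (hmeas l) (.of_forall (hrange l)) hm ht
    (etaF f μ a - ε + a)
  rw [add_sub_cancel_right] at htail
  refine (measureReal_mono fun S (hS : etahat f S a + ε ≤ etaF f μ a) ↦ ?_).trans htail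
  rw [Set.mem_ofPred_eq]
  linarith [inv_mul_sum_le_etahat_add hrange hm S l]

lemma measureReal_etahat_add_le_etaF_le_exp_hfun (hab : a < b)
    (hmeas : ∀ l, AEMeasurable (f l) μ) (hrange : ∀ l x, f l x ∈ Set.Icc a b) (hm : 0 < m)
    {ε : ℝ} (hε : 0 < ε) (hεη : ε ≤ etaF f μ a) :
    (Measure.pi fun _ : Fin m ↦ μ).real {S | etahat f S a + ε ≤ etaF f μ a} ≤
      Real.exp (-(m * etaF f μ a / (b - a)) * hfun (-ε / etaF f μ a)) := by
  rw [mul_div_right_comm]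
  exact le_exp_neg_mul_hfun_of_forall_le_exp hε hεη fun _ ht ↦
    measureReal_etahat_add_le_etaF_le_exp_of_nonpos hab hmeas hrange hm ε ht

lemma measureReal_etahat_add_sqrt_lt_etaF_le (hab : a < b)
    (hmeas : ∀ l, AEMeasurable (f l) μ) (hrange : ∀ l x, f l x ∈ Set.Icc a b) (hm : 0 < m)
    {K : ℝ} (hK : 0 < K) :
    (Measure.pi fun _ : Fin m ↦ μ).real
        {S | etahat f S a + K + √(K ^ 2 + 2 * K * etahat f S a) < etaF f μ a} ≤
      Real.exp (-(m * K / (b - a))) := by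
  set bad := {S : Fin m → X | etahat f S a + K + √(K ^ 2 + 2 * K * etahat f S a) < etaF f μ a}
  set ε := √(2 * K * etaF f μ a) with hεdef
  have hbad : bad ⊆ {S | etahat f S a + ε ≤ etaF f μ a} := fun _ hS ↦
    add_sqrt_le_of_add_sqrt_quadratic_lt hK.le hS
  rcases bad.eq_empty_or_nonempty with hempty | ⟨S, hS⟩
  · rw [hempty, measureReal_empty]
    positivity
  have hη : 0 < etaF f μ a := by
    have hlt : etahat f S a + K + √(K ^ 2 + 2 * K * etahat f S a) < etaF f μ a := hS
    linarith [etahat_nonneg hrange hm S, Real.sqrt_nonneg (K ^ 2 + 2 * K * etahat f S a)]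
  have hε : 0 < ε := Real.sqrt_pos.2 (by positivity)
  have hεη : ε ≤ etaF f μ a :=
    (le_add_of_nonneg_left (etahat_nonneg hrange hm S)).trans (hbad hS)
  have hc : 0 < b - a := sub_pos.2 hab
  calc _ ≤ (Measure.pi fun _ : Fin m ↦ μ).real {S | etahat f S a + ε ≤ etaF f μ a} :=
        measureReal_mono hbad
    _ ≤ Real.exp (-(m * etaF f μ a / (b - a)) * hfun (-ε / etaF f μ a)) :=
        measureReal_etahat_add_le_etaF_le_exp_hfun hab hmeas hrange hm hε hεη
    _ ≤ Real.exp (-(m * ε ^ 2) / (2 * (b - a) * etaF f μ a)) :=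
        exp_hfun_le_exp_neg_sq m.cast_nonneg hc hε hεη
    _ = Real.exp (-(m * K / (b - a))) := by
        rw [hεdef, Real.sq_sqrt (by positivity)]
        congr 1
        field_simp

end LowerTail

/-- For an uncountable class the events need not be measurable, so the confidence bound is stated
as an upper bound on the outer measure of its failure. -/
theorem stmt_17_general {X : Type*} [MeasurableSpace X] {ι : Type*} [Nonempty ι]
    (f : ι → X → ℝ) (a b : ℝ) (hab : a < b) (μ : Measure X) [IsProbabilityMeasure μ]
    (hmeas : ∀ l, AEMeasurable (f l) μ) (hrange : ∀ l x, f l x ∈ Set.Icc a b)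
    (m : ℕ) (hm : 0 < m) :
    (∀ ε : ℝ, 0 < ε → ε ≤ etaF f μ a →
      (Measure.pi fun _ : Fin m ↦ μ).real {S | etahat f S a + ε ≤ etaF f μ a} ≤
        Real.exp (-(m * etaF f μ a / (b - a)) * hfun (-ε / etaF f μ a)) ∧
      Real.exp (-(m * etaF f μ a / (b - a)) * hfun (-ε / etaF f μ a)) ≤
        Real.exp (-(m * ε ^ 2) / (2 * (b - a) * etaF f μ a))) ∧
    ∀ δ ∈ Set.Ioo (0 : ℝ) 1,
      (Measure.pi fun _ : Fin m ↦ μ).real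
        {S | etaF f μ a ≤ etahat f S a + (b - a) * Real.log (1 / δ) / m +
          √(((b - a) * Real.log (1 / δ) / m) ^ 2 +
            2 * (b - a) * etahat f S a * Real.log (1 / δ) / m)}ᶜ ≤ δ := by
  have hc : 0 < b - a := sub_pos.2 hab
  refine ⟨fun ε hε hεη ↦ ⟨measureReal_etahat_add_le_etaF_le_exp_hfun hab hmeas hrange hm hε hεη,
    exp_hfun_le_exp_neg_sq m.cast_nonneg hc hε hεη⟩, fun δ ⟨hδ0, hδ1⟩ ↦ ?_⟩
  have hlog : 0 < Real.log (1 / δ) := Real.log_pos ((one_lt_div hδ0).2 hδ1)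
  have hfail := measureReal_etahat_add_sqrt_lt_etaF_le hab hmeas hrange hm
    (K := (b - a) * Real.log (1 / δ) / m) (by positivity)
  have hδ : Real.exp (-(m * ((b - a) * Real.log (1 / δ) / m) / (b - a))) = δ := by
    rw [mul_div_cancel₀ _ (by positivity), mul_div_cancel_left₀ _ hc.ne', one_div, Real.log_inv,
      neg_neg, Real.exp_log hδ0]
  have hcross (e : ℝ) : 2 * (b - a) * e * Real.log (1 / δ) / m =
      2 * ((b - a) * Real.log (1 / δ) / m) * e := by ring
  simpa only [Set.compl_ofPred, not_le, hcross, hδ] using hfail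

theorem stmt_17 {X : Type*} [MeasurableSpace X] {ι : Type*} [Countable ι]
    (f : ι → X → ℝ) (a b : ℝ) (ha : a ≤ 0) (hb : 0 < b)
    (hmeas : ∀ l : ι, Measurable (f l))
    (hrange : ∀ (l : ι) (x : X), f l x ∈ Set.Icc a b)
    (hzero : ∃ l₀ : ι, ∀ x : X, f l₀ x = 0)
    (μ : Measure X) [IsProbabilityMeasure μ] (m : ℕ) (hm : 0 < m) :
    (∀ ε : ℝ, 0 < ε → ε ≤ etaF f μ a →
      ((Measure.pi fun _ : Fin m => μ)
          {S : Fin m → X | etaF f μ a ≥ etahat f S a + ε}).toReal ≤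
        Real.exp (-((m : ℝ) * etaF f μ a / (b - a)) * hfun (-ε / etaF f μ a)) ∧
      Real.exp (-((m : ℝ) * etaF f μ a / (b - a)) * hfun (-ε / etaF f μ a)) ≤
        Real.exp (-((m : ℝ) * ε ^ 2) / (2 * (b - a) * etaF f μ a))) ∧
    ∀ δ : ℝ, δ ∈ Set.Ioo (0 : ℝ) 1 →
      1 - δ ≤ ((Measure.pi fun _ : Fin m => μ)
        {S : Fin m → X | etaF f μ a ≤ etahat f S a + (b - a) * Real.log (1 / δ) / m +
          Real.sqrt (((b - a) * Real.log (1 / δ) / m) ^ 2 +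
            2 * (b - a) * etahat f S a * Real.log (1 / δ) / m)}).toReal := by
  have : Nonempty ι := hzero.nonempty
  have h := stmt_17_general f a b (ha.trans_lt hb) μ (fun l ↦ (hmeas l).aemeasurable) hrange m hm
  exact ⟨h.1, fun δ hδ ↦ one_sub_le_measureReal_of_compl_le (h.2 δ hδ)⟩
end
end
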